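/- arXiv:2404.09175 — 4 statements merged into one kernel-verified Lean document; each statement's English description precedes it below -/
import Mathlib

section
/- Suppose π ∈ A, Γ ⊆ A, and [K : 𝔽_q(π)] = [K_v : 𝔽_q((π))]. Let α₁, …, α_{ef} ∈ A be elements whose reductions modulo πA are linearly independent over 𝔽_q (here e = v(π), f is the residue degree, and dim_{𝔽_q} A/πA = ef). If Γ ⊆ 𝔽_q[π]·α₁ + ⋯ + 𝔽_q[π]·α_{ef} (every γ ∈ Γ is an 𝔽_q[π]-linear combination of α₁, …, α_{ef}, where 𝔽_q[π] is the ring of polynomials in π over 𝔽_q), then (Γ, π) has property A. -/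
/-!
Common setup: `Kv` is a complete field equipped with a (normalized, `ℤ`-valued)
valuation `Valued.v : Kv → ℤₘ₀ = WithZero (Multiplicative ℤ)`, and `K` is a dense
subfield of `Kv` (so that `Kv` is the completion `K_v` of `K`).  The valuation is
written multiplicatively: the additive valuation of `x` is `n` iff
`Valued.v x = ofAdd (-n)`; the valuation ring `A_v` is `{x | Valued.v x ≤ 1}` and
`π A_v = {x | Valued.v x ≤ Valued.v π}`.
-/

open scoped Multiplicative

/-- The multiplicative value monoid `ℤₘ₀` for normalized `ℤ`-valued valuations. -/
abbrev ZM0 : Type := WithZero (Multiplicative ℤ)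

/-- A sequence `b : ℕ → α` is `k`-automatic if its `k`-kernel
`{ (b (n k^i + j))_n : i ≥ 0, 0 ≤ j < k^i }` is finite. -/
def IsKAutomatic {α : Type*} (k : ℕ) (b : ℕ → α) : Prop :=
  {c : ℕ → α | ∃ i j : ℕ, j < k ^ i ∧ c = fun n => b (n * k ^ i + j)}.Finite

/-- The sequence `{a n}_{n ≥ m}` is ultimately periodic: there are `N ≥ m` and
`L > 0` with `a (n + L) = a n` for all `n ≥ N`. -/
def UltimatelyPeriodic {α : Type*} (m : ℤ) (a : ℤ → α) : Prop :=
  ∃ N L : ℤ, m ≤ N ∧ 0 < L ∧ ∀ n : ℤ, N ≤ n → a (n + L) = a n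

variable {Kv : Type*} [Field Kv] [Valued Kv ZM0]

/-- `x = ∑_{n ≥ m} a_n π^n` is the expansion of `x` with respect to `(Γ, π)`:
all digits `a n` for `n ≥ m` lie in `Γ` and the series converges to `x`. -/
def IsExpansion (π : Kv) (Γ : Set Kv) (m : ℤ) (a : ℤ → Kv) (x : Kv) : Prop :=
  (∀ n : ℤ, m ≤ n → a n ∈ Γ) ∧
    HasSum (fun n : ℕ => a (m + n) * π ^ (m + (n : ℤ))) x

/-- `Γ ⊆ A_v` is a complete set of representatives of `A_v / π A_v`: reduction
modulo `π A_v` maps `Γ` bijectively onto `A_v / π A_v`. -/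
def IsCompleteSetOfReps (π : Kv) (Γ : Set Kv) : Prop :=
  (∀ γ ∈ Γ, Valued.v γ ≤ 1) ∧
    ∀ x : Kv, Valued.v x ≤ 1 → ∃! γ, γ ∈ Γ ∧ Valued.v (x - γ) ≤ Valued.v π

/-- `(Γ, π)` has property A: for every `x ∈ K_v`, `x` is rational (i.e. `x ∈ K`)
iff the digit sequence of the expansion of `x` w.r.t. `(Γ, π)` is ultimately
periodic. -/
def HasPropertyA (K : Subfield Kv) (π : Kv) (Γ : Set Kv) : Prop :=
  ∀ (x : Kv) (m : ℤ) (a : ℤ → Kv), IsExpansion π Γ m a x →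
    (x ∈ K ↔ UltimatelyPeriodic m a)

/-- `(Γ, π)` has property B: for every `x ∈ K_v`, `x` is algebraic over `K` iff
the digit sequence of the expansion of `x` w.r.t. `(Γ, π)` is `p`-automatic. -/
def HasPropertyB (p : ℕ) (K : Subfield Kv) (π : Kv) (Γ : Set Kv) : Prop :=
  ∀ (x : Kv) (m : ℤ) (a : ℤ → Kv), IsExpansion π Γ m a x →
    (IsAlgebraic ↥K x ↔ IsKAutomatic p fun n : ℕ => a (m + n))

/-- The degree `[S : F]` of a subset `S ⊆ Kv` over a subfield `F ⊆ Kv` (intended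
for `F ⊆ S` with `S` a field): the rank of the `F`-span of `S` in `Kv`. -/
noncomputable def degOver (F : Subfield Kv) (S : Set Kv) : Cardinal :=
  Module.rank ↥F ↥(Submodule.span ↥F S)

/-- `Kv` is the completion of a global function field `K` of characteristic `p`
with respect to a normalized nontrivial valuation:  `Kv` has characteristic `p`
and is complete, `K` is dense in `Kv`, the valuation takes every value `ofAdd n`
(`n ∈ ℤ`) on `K` (normalization/nontriviality), and `K` contains an element `x₀`
transcendental over the prime field `𝔽_p = ⊥` with `[K : 𝔽_p(x₀)] < ∞`. -/
structure IsGlobalFunctionFieldCompletion (p : ℕ) (K : Subfield Kv) : Prop where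
  charP : CharP Kv p
  complete : CompleteSpace Kv
  dense : Dense (K : Set Kv)
  normalized : ∀ n : ℤ, ∃ x ∈ K,
    Valued.v x = ((Multiplicative.ofAdd n : Multiplicative ℤ) : ZM0)
  globalFunctionField : ∃ x₀ ∈ K, Transcendental (⊥ : Subfield Kv) x₀ ∧
    degOver (Subfield.closure {x₀}) (K : Set Kv) < Cardinal.aleph0

/-- The constant field `𝔽_q` of `K`: the algebraic closure of `𝔽_p` in `K`,
i.e. the elements of `K` fixed by some positive power of the Frobenius. -/
def ConstantField (p : ℕ) (K : Subfield Kv) : Set Kv :=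
  {x : Kv | x ∈ K ∧ ∃ n : ℕ, 0 < n ∧ x ^ p ^ n = x}

/-- The subfield `𝔽_q(π)` of `Kv` generated by `π` over the constant field. -/
def FqPi (p : ℕ) (K : Subfield Kv) (π : Kv) : Subfield Kv :=
  Subfield.closure (ConstantField p K ∪ {π})

/-- `𝔽_q((π))`: the completion of `𝔽_q(π)`, i.e. its closure in `Kv`. -/
noncomputable def FqPiCompletion (p : ℕ) (K : Subfield Kv) (π : Kv) : Subfield Kv :=
  (FqPi p K π).topologicalClosure

/-- The set `𝔽_q[π]` of polynomials in `π` with coefficients in the constant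
field `𝔽_q` of `K`. -/
def PolyInPi (p : ℕ) {Kv : Type*} [Field Kv] (K : Subfield Kv) (π : Kv) : Set Kv :=
  {y : Kv | ∃ (N : ℕ) (c : ℕ → Kv), (∀ k, c k ∈ ConstantField p K) ∧
    y = ∑ k ∈ Finset.range N, c k * π ^ k}


theorem pd_common_denom {k : Type*} [Field k] (S : Set k) {ι : Type*} [Fintype ι]
    (l : ι → k) (hl : ∀ i, l i ∈ Subfield.closure S) :
    ∃ z ∈ Subring.closure S, z ≠ 0 ∧ ∀ i, z * l i ∈ Subring.closure S := by
  classical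
  have h : ∀ i, ∃ z ∈ Subring.closure S, z ≠ 0 ∧ z * l i ∈ Subring.closure S := by
    intro i
    obtain ⟨y, hy, z, hz, h⟩ := Subfield.mem_closure_iff.1 (hl i)
    by_cases hz0 : z = 0
    · refine ⟨1, one_mem _, one_ne_zero, ?_⟩
      rw [← h, hz0]; simp
    · refine ⟨z, hz, hz0, ?_⟩
      rw [← h, mul_div_cancel₀ _ hz0]; exact hy
  choose z hz hz0 hzl using h
  refine ⟨∏ i, z i, prod_mem fun i _ => hz i, Finset.prod_ne_zero_iff.2 fun i _ => hz0 i, fun i => ?_⟩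
  rw [← Finset.prod_erase_mul _ _ (Finset.mem_univ i), mul_assoc]
  exact mul_mem (prod_mem fun j _ => hz j) (hzl i)

theorem pd_closure_poly {k : Type*} [Field k] (F : Subfield k) (S : Set k) (t : k)
    (hS : S ⊆ F ∪ {t}) {y : k} (hy : y ∈ Subring.closure S) :
    ∃ q : Polynomial F, Polynomial.aeval t q = y := by
  have : Subring.closure S ≤ (Polynomial.aeval t : Polynomial F →ₐ[F] k).range.toSubring := by
    rw [Subring.closure_le]
    intro x hx
    rcases hS hx with h | h
    · exact ⟨Polynomial.C ⟨x, h⟩, by simp; rfl⟩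
    · exact ⟨Polynomial.X, by simpa using h.symm⟩
  exact this hy

/-- linear independence of constants persists over `k₀(t)`. -/
theorem pd_indep {k : Type*} [Field k] (t : k) (ht : Transcendental (⊥ : Subfield k) t)
    {ι : Type*} [Fintype ι] (w : ι → k) (hw : ∀ i, IsAlgebraic (⊥ : Subfield k) (w i))
    (hli : LinearIndependent (⊥ : Subfield k) w) :
    LinearIndependent (Subfield.closure {t} : Subfield k) w := by
  classical
  rw [Fintype.linearIndependent_iff] at hli ⊢
  intro l hl
  obtain ⟨z, hz, hz0, hzl⟩ := pd_common_denom {t} (fun i => (l i : k)) (fun i => (l i).2)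
  choose q hq using fun i => pd_closure_poly (⊥ : Subfield k) {t} t (by simp) (hzl i)
  let B := Subalgebra.algebraicClosure (⊥ : Subfield k) k
  have htB : Transcendental B t := ht.extendScalars _
  let g : Polynomial B := ∑ i, Polynomial.C (⟨w i, hw i⟩ : B) * (q i).map (algebraMap (⊥ : Subfield k) B)
  have hg : g = 0 := by
    by_contra hne
    apply htB
    refine ⟨g, hne, ?_⟩
    simp only [g, map_sum, map_mul, Polynomial.aeval_C, Polynomial.aeval_map_algebraMap, hq]
    have : ∑ i, z * (l i • w i) = 0 := by rw [← Finset.mul_sum, hl, mul_zero]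
    rw [← this]
    refine Finset.sum_congr rfl fun i _ => ?_
    rw [Subfield.smul_def, smul_eq_mul]
    change w i * _ = _
    ring
  have hq0 : ∀ i, q i = 0 := by
    intro i
    ext n
    have h1 : g.coeff n = 0 := by rw [hg]; simp
    have h2 : ∑ i, (q i).coeff n • w i = 0 := by
      have := congrArg (fun b : B => (b : k)) h1
      simp only [g, Polynomial.finsetSum_coeff, Polynomial.coeff_C_mul, Polynomial.coeff_map] at this
      rw [AddSubmonoidClass.coe_finsetSum] at this
      rw [ZeroMemClass.coe_zero] at this
      rw [← this]
      refine Finset.sum_congr rfl fun i _ => ?_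
      rw [Subfield.smul_def, smul_eq_mul, mul_comm]
      rfl
    have := hli _ h2 i
    simpa using congrArg Subtype.val this
  intro i
  have := hq i
  rw [hq0 i, map_zero] at this
  have := (mul_eq_zero.1 this.symm).resolve_left hz0
  exact Subtype.ext this

theorem pd_fix_mul {k : Type*} [Monoid k] (p : ℕ) {x : k} {n : ℕ} (h : x ^ p ^ n = x) (m : ℕ) :
    x ^ p ^ (n * m) = x := by
  induction m with
  | zero => simp
  | succ m ih => rw [Nat.mul_succ, pow_add, pow_mul, ih, h]

/-- The constant field as a subfield. -/
def pdFq {Kv : Type*} [Field Kv] (p : ℕ) [Fact p.Prime] [CharP Kv p] (K : Subfield Kv) : Subfield Kv where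
  carrier := ConstantField p K
  mul_mem' := by
    rintro a b ⟨ha, n, hn, h1⟩ ⟨hb, m, hm, h2⟩
    refine ⟨mul_mem ha hb, n * m, Nat.mul_pos hn hm, ?_⟩
    rw [mul_pow, pd_fix_mul p h1, mul_comm n m, pd_fix_mul p h2]
  one_mem' := ⟨one_mem _, 1, one_pos, one_pow _⟩
  add_mem' := by
    rintro a b ⟨ha, n, hn, h1⟩ ⟨hb, m, hm, h2⟩
    refine ⟨add_mem ha hb, n * m, Nat.mul_pos hn hm, ?_⟩
    rw [add_pow_char_pow, pd_fix_mul p h1, mul_comm n m, pd_fix_mul p h2]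
  zero_mem' := ⟨zero_mem _, 1, one_pos, zero_pow (pow_ne_zero _ (Fact.out : p.Prime).ne_zero)⟩
  neg_mem' := by
    rintro a ⟨ha, n, hn, h1⟩
    refine ⟨neg_mem ha, n, hn, ?_⟩
    have : (a + -a) ^ p ^ n = a ^ p ^ n + (-a) ^ p ^ n := add_pow_char_pow ..
    rw [add_neg_cancel, zero_pow (pow_ne_zero _ (Fact.out : p.Prime).ne_zero), h1] at this
    exact (neg_eq_of_add_eq_zero_right this.symm).symm
  inv_mem' := by
    rintro a ⟨ha, n, hn, h1⟩
    exact ⟨inv_mem ha, n, hn, by rw [inv_pow, h1]⟩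

theorem pd_finite {Kv : Type*} [Field Kv] [Valued Kv ZM0]
    (p : ℕ) [Fact p.Prime] (K : Subfield Kv)
    (hK : IsGlobalFunctionFieldCompletion p K) [CharP Kv p] : Finite (pdFq p K) := by
  classical
  obtain ⟨t, htK, ht, hd⟩ := hK.globalFunctionField
  let V : Submodule (⊥ : Subfield Kv) Kv :=
    { carrier := ConstantField p K
      add_mem' := fun {a b} ha hb => (pdFq p K).add_mem ha hb
      zero_mem' := (pdFq p K).zero_mem
      smul_mem' := fun c x hx => by
        rw [Subfield.smul_def, smul_eq_mul]
        exact (pdFq p K).mul_mem ((bot_le : (⊥ : Subfield Kv) ≤ pdFq p K) c.2) hx }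
  have hbot : Finite (⊥ : Subfield Kv) := by
    let _ := ZMod.algebra Kv p
    rw [← ZMod.fieldRange_castHom_eq_bot p (K := Kv)]
    exact Set.finite_range _
  unfold degOver at hd
  obtain ⟨d, hd'⟩ := Cardinal.lt_aleph0.1 hd
  have hr : Module.rank (⊥ : Subfield Kv) V ≤ d := by
    apply rank_le
    intro s hs
    have h1 : LinearIndependent (⊥ : Subfield Kv) (fun i : s => ((i : V) : Kv)) :=
      hs.map' V.subtype (Submodule.ker_subtype V)
    have h2 := pd_indep t ht _ (fun i => by
      obtain ⟨hk, n, hn, hx⟩ := (i : V).2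
      refine ⟨Polynomial.X ^ p ^ n - Polynomial.X, ?_, ?_⟩
      · apply FiniteField.X_pow_card_sub_X_ne_zero
        exact Nat.one_lt_pow hn.ne' (Fact.out : p.Prime).one_lt
      · simp [hx]) h1
    let w' : s → Submodule.span (Subfield.closure {t} : Subfield Kv) (K : Set Kv) :=
      fun i => ⟨((i : V) : Kv), Submodule.subset_span (i : V).2.1⟩
    have h3 : LinearIndependent (Subfield.closure {t} : Subfield Kv) w' :=
      LinearIndependent.of_comp (Submodule.subtype _) h2
    have h4 := h3.cardinal_le_rank
    rw [hd'] at h4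
    simpa using h4
  have : Module.Finite (⊥ : Subfield Kv) V := by
    have : Module.Free (⊥ : Subfield Kv) V := Module.Free.of_divisionRing _ _
    rw [← Module.rank_lt_aleph0_iff]
    exact hr.trans_lt (Cardinal.natCast_lt_aleph0)
  have : Finite V := Module.finite_of_finite (⊥ : Subfield Kv)
  exact this

theorem pd_pow_lt {a b : ZM0} (ha : a < 1) (hb : b ≠ 0) : ∃ n : ℕ, a ^ n < b := by
  exact exists_pow_lt₀ ha (Units.mk0 b hb)

section
variable {Kv : Type*} [Field Kv] [Valued Kv ZM0]

theorem pd_tendsto {π : Kv} (hπ : Valued.v π < 1) (y : ℕ → Kv) (hy : ∀ n, Valued.v (y n) ≤ 1) :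
    Filter.Tendsto (fun n => y n * π ^ n) Filter.atTop (nhds 0) := by
  rw [Filter.tendsto_def]
  intro s hs
  obtain ⟨γ, hγ⟩ := Valued.mem_nhds_zero.1 hs
  obtain ⟨N, hN⟩ := pd_pow_lt (a := Valued.v π) hπ
    (b := MonoidWithZeroHom.ValueGroup₀.embedding γ.1) (by simp)
  refine Filter.mem_atTop_sets.2 ⟨N, fun n hn => hγ ?_⟩
  change (Valued.v (R := Kv)).restrict (y n * π ^ n) < _
  rw [Valuation.restrict_lt_iff_lt_embedding]
  refine lt_of_le_of_lt ?_ hN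
  rw [map_mul, map_pow]
  calc _ ≤ 1 * Valued.v π ^ N := mul_le_mul' (hy n) (pow_le_pow_right_of_le_one' hπ.le hn)
    _ = _ := one_mul _

theorem pd_summable [CompleteSpace Kv] {π : Kv} (hπ : Valued.v π < 1) (y : ℕ → Kv)
    (hy : ∀ n, Valued.v (y n) ≤ 1) : Summable (fun n => y n * π ^ n) := by
  have : NonarchimedeanAddGroup Kv := by
    refine ⟨fun U hU => ?_⟩
    obtain ⟨γ, hγ⟩ := Valued.mem_nhds_zero.1 hU
    exact ⟨⟨(Valued.v (R := Kv)).restrict.ltAddSubgroup γ, Valued.isOpen_ball Kv γ.1⟩, hγ⟩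
  apply NonarchimedeanAddGroup.summable_of_tendsto_cofinite_zero
  rw [Nat.cofinite_eq_atTop]
  exact pd_tendsto hπ y hy

theorem pd_hasSum_le {π : Kv} (hπ : Valued.v π < 1) {y : ℕ → Kv}
    (hy : ∀ n, Valued.v (y n) ≤ 1) {x : Kv} (h : HasSum (fun n => y n * π ^ n) x) :
    Valued.v x ≤ 1 := by
  have hc : IsClosed ((Valued.v (R := Kv)).integer : Set Kv) := Valued.isClosed_integer Kv
  refine hc.mem_of_tendsto h (Filter.Eventually.of_forall fun s => ?_)
  refine sum_mem fun n _ => ?_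
  rw [Valuation.mem_integer_iff]
  rw [map_mul, map_pow]
  exact mul_le_one' (hy n) (pow_le_one' hπ.le n)

theorem pd_const_le {p : ℕ} [Fact p.Prime] {K : Subfield Kv} {c : Kv} (hc : c ∈ ConstantField p K) :
    Valued.v c ≤ 1 := by
  obtain ⟨_, n, hn, h⟩ := hc
  by_contra hlt
  push Not at hlt
  have : Valued.v c < Valued.v c ^ p ^ n :=
    lt_self_pow₀ hlt (Nat.one_lt_pow hn.ne' (Fact.out : p.Prime).one_lt)
  rw [← map_pow, h] at this
  exact lt_irrefl _ this

/-- approximating an element of `A_v` by an element of `K` modulo `π`. -/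
theorem pd_approx {K : Subfield Kv} (hK : Dense (K : Set Kv)) {π : Kv} (hπ0 : π ≠ 0) (x : Kv) :
    ∃ y ∈ K, Valued.v (x - y) ≤ Valued.v π := by
  have ho : IsOpen ((Valued.v (R := Kv)).integer : Set Kv) := Valued.isOpen_integer Kv
  have ho2 : IsOpen ((fun y => (x - y) * π⁻¹) ⁻¹' ((Valued.v (R := Kv)).integer : Set Kv)) :=
    ho.preimage (by fun_prop)
  obtain ⟨y, hy, hyK⟩ := hK.inter_open_nonempty _ ho2 ⟨x, by simp⟩
  refine ⟨y, hyK, ?_⟩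
  have : Valued.v ((x - y) * π⁻¹) ≤ 1 := hy
  rw [map_mul, map_inv₀] at this
  have h0 : Valued.v π ≠ 0 := by simpa using hπ0
  calc _ = Valued.v (x - y) * (Valued.v π)⁻¹ * Valued.v π := by
        rw [inv_mul_cancel_right₀ h0]
    _ ≤ 1 * Valued.v π := mul_le_mul_left this _
    _ = _ := one_mul _

theorem pd_div_le {π y : Kv} (hπ0 : π ≠ 0) (h : Valued.v y ≤ Valued.v π) : Valued.v (y / π) ≤ 1 := by
  have h0 : Valued.v π ≠ 0 := by simpa using hπ0
  rw [map_div₀]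
  exact div_le_one_of_le₀ h zero_le

theorem pd_span (p : ℕ) [Fact p.Prime] (K : Subfield Kv)
    (hK : IsGlobalFunctionFieldCompletion p K)
    (π : Kv) (hπ0 : π ≠ 0) (hπ : Valued.v π < 1)
    (s : ℕ) (α : Fin s → Kv)
    (hgen : ∀ x : Kv, x ∈ K → Valued.v x ≤ 1 →
      ∃ c : Fin s → Kv, (∀ i, c i ∈ ConstantField p K) ∧
        Valued.v (x - ∑ i, c i * α i) ≤ Valued.v π) (x : Kv) :
    x ∈ Submodule.span (FqPiCompletion p K π) (Set.range α) := by
  have := hK.complete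
  have hπL : π ∈ FqPiCompletion p K π := Subfield.le_topologicalClosure _
    (Subfield.subset_closure (Or.inr rfl))
  have hcL : ∀ c ∈ ConstantField p K, c ∈ FqPiCompletion p K π := fun c hc =>
    Subfield.le_topologicalClosure _ (Subfield.subset_closure (Or.inl hc))
  have hstep : ∀ y : {y : Kv // Valued.v y ≤ 1}, ∃ c : Fin s → Kv, (∀ i, c i ∈ ConstantField p K) ∧
      ∃ y' : {y : Kv // Valued.v y ≤ 1}, (y : Kv) = ∑ i, c i * α i + π * y' := by
    rintro ⟨y, hy⟩
    obtain ⟨z, hz, hyz⟩ := pd_approx hK.dense hπ0 y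
    have hz1 : Valued.v z ≤ 1 := by
      have : z = y - (y - z) := by ring
      rw [this]
      exact (Valuation.map_sub _ _ _).trans (max_le hy (hyz.trans hπ.le))
    obtain ⟨c, hc, h⟩ := hgen z hz hz1
    refine ⟨c, hc, ⟨(y - ∑ i, c i * α i) / π, pd_div_le hπ0 ?_⟩, ?_⟩
    · have : y - ∑ i, c i * α i = (y - z) + (z - ∑ i, c i * α i) := by ring
      rw [this]
      exact (Valuation.map_add _ _ _).trans (max_le hyz h)
    · simp only; rw [mul_div_cancel₀ _ hπ0]; ring
  choose c hc nx hnx using hstep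
  have key : ∀ x : Kv, Valued.v x ≤ 1 →
      x ∈ Submodule.span (FqPiCompletion p K π) (Set.range α) := by
    intro x hx
    let Y : ℕ → {y : Kv // Valued.v y ≤ 1} := fun n => nx^[n] ⟨x, hx⟩
    have hYs : ∀ n, (Y n : Kv) = ∑ i, c (Y n) i * α i + π * Y (n + 1) := by
      intro n
      have : Y (n + 1) = nx (Y n) := Function.iterate_succ_apply' _ _ _
      rw [this]; exact hnx _
    have hpart : ∀ N, x = ∑ i, (∑ n ∈ Finset.range N, c (Y n) i * π ^ n) * α i + Y N * π ^ N := by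
      intro N
      induction N with
      | zero => simp [Y]
      | succ N ih =>
        rw [ih]
        conv_lhs => rw [hYs N]
        simp only [Finset.sum_range_succ, add_mul, Finset.sum_add_distrib, Finset.sum_mul]
        rw [add_assoc]
        congr 1
        · congr 1
          · refine Finset.sum_congr rfl fun i _ => by ring
          · ring
    have hb : ∀ i, ∃ b ∈ FqPiCompletion p K π, HasSum (fun n => c (Y n) i * π ^ n) b := by
      intro i
      have hs := (pd_summable hπ (fun n => c (Y n) i) (fun n => pd_const_le (hc _ _))).hasSum
      refine ⟨_, ?_, hs⟩
      refine (Subfield.isClosed_topologicalClosure (FqPi p K π)).mem_of_tendsto hs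
        (Filter.Eventually.of_forall fun t => ?_)
      change _ ∈ FqPiCompletion p K π
      exact sum_mem fun n _ =>
        mul_mem (hcL _ (hc _ _)) (pow_mem hπL n)
    choose b hbL hb using hb
    have hlim : Filter.Tendsto (fun N => ∑ i, (∑ n ∈ Finset.range N, c (Y n) i * π ^ n) * α i + Y N * π ^ N)
        Filter.atTop (nhds (∑ i, b i * α i + 0)) := by
      refine Filter.Tendsto.add ?_ (pd_tendsto hπ _ fun n => (Y n).2)
      exact tendsto_finsetSum _ fun i _ => ((hb i).tendsto_sum_nat.mul_const _)
    have hx' : x = ∑ i, b i * α i := by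
      have h2 := hlim.congr (fun N => (hpart N).symm)
      rw [add_zero] at h2
      exact tendsto_nhds_unique tendsto_const_nhds h2
    rw [hx']
    refine sum_mem fun i _ => ?_
    exact Submodule.smul_mem _ (⟨b i, hbL i⟩ : FqPiCompletion p K π) (Submodule.subset_span ⟨i, rfl⟩)
  by_cases hx0 : x = 0
  · rw [hx0]; exact zero_mem _
  have hvx : Valued.v x ≠ 0 := by simpa using hx0
  obtain ⟨N, hN⟩ := pd_pow_lt hπ (inv_ne_zero hvx)
  have h1 := key (π ^ N * x) (by
    rw [map_mul, map_pow]
    calc _ ≤ (Valued.v x)⁻¹ * Valued.v x := mul_le_mul_left hN.le _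
      _ = 1 := inv_mul_cancel₀ hvx)
  have h2 := Submodule.smul_mem _ (⟨π ^ N, pow_mem hπL N⟩ : FqPiCompletion p K π)⁻¹ h1
  convert h2 using 1
  rw [Subfield.smul_def, smul_eq_mul]
  simp [hπ0]

end

section
variable {Kv : Type*} [Field Kv] [Valued Kv ZM0]

theorem pd_seq {π : Kv} (hπ0 : π ≠ 0) (hπ : Valued.v π < 1) {b : ℕ → Kv}
    (hb : ∀ n, Valued.v (b n) ≤ 1) {z : Kv} (hz : HasSum (fun n => b n * π ^ n) z) :
    ∃ X : ℕ → Kv, (∀ n, HasSum (fun k => b (k + n) * π ^ k) (X n)) ∧ X 0 = z ∧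
      (∀ n, Valued.v (X n) ≤ 1) ∧ ∀ n, X n = b n + π * X (n + 1) := by
  have h : ∀ n, ∃ x, HasSum (fun k => b (k + n) * π ^ k) x := by
    intro n
    have h1 := ((summable_nat_add_iff n).2 hz.summable).hasSum.mul_right (π ^ n)⁻¹
    refine ⟨_, h1.congr_fun ?_⟩
    intro k
    rw [pow_add]
    field_simp
  choose X hX using h
  refine ⟨X, hX, (hX 0).unique (by simpa using hz), fun n => pd_hasSum_le hπ (fun k => hb _) (hX n), ?_⟩
  intro n
  refine (hX n).unique ?_
  have h1 : HasSum (fun k => b (k + 1 + n) * π ^ (k + 1)) (π * X (n + 1)) := by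
    refine ((hX (n + 1)).mul_left π).congr_fun ?_
    intro k
    rw [show k + 1 + n = k + (n + 1) by ring]
    ring
  have h2 := (hasSum_nat_add_iff (f := fun k => b (k + n) * π ^ k) 1).1 h1
  simpa [add_comm] using h2

theorem pd_periodic_mem (K : Subfield Kv) {π : Kv} (hπ : Valued.v π < 1)
    (hπK : π ∈ K) {b : ℕ → Kv} (hbK : ∀ n, b n ∈ K) {X : ℕ → Kv}
    (hX : ∀ n, HasSum (fun k => b (k + n) * π ^ k) (X n))
    (hs : ∀ n, X n = b n + π * X (n + 1)) {N L : ℕ} (hL : 0 < L)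
    (hper : ∀ n, N ≤ n → b (n + L) = b n) : X 0 ∈ K := by
  have hA : ∀ n l, ∃ A ∈ K, X n = A + π ^ l * X (n + l) := by
    intro n l
    induction l with
    | zero => exact ⟨0, zero_mem _, by simp⟩
    | succ l ih =>
      obtain ⟨A, hA, h⟩ := ih
      refine ⟨A + π ^ l * b (n + l), add_mem hA (mul_mem (pow_mem hπK l) (hbK _)), ?_⟩
      rw [h, hs (n + l), ← add_assoc]; ring
  have heq : X (N + L) = X N := by
    refine (hX (N + L)).unique ((hX N).congr_fun ?_)
    intro k
    rw [← hper (k + N) (by lia), add_assoc]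
  have hN : X N ∈ K := by
    obtain ⟨A, hA, h⟩ := hA N L
    rw [heq] at h
    have h1 : 1 - π ^ L ≠ 0 := by
      intro h0
      have h2 : π ^ L = 1 := (sub_eq_zero.1 h0).symm
      have h3 : Valued.v π ^ L = 1 := by rw [← map_pow, h2, map_one]
      exact (pow_lt_one₀ zero_le hπ hL.ne').ne h3
    have h2 : X N = A / (1 - π ^ L) := by
      rw [eq_div_iff h1]; linear_combination h
    rw [h2]
    exact div_mem hA (sub_mem (one_mem _) (pow_mem hπK L))
  obtain ⟨A, hA, h⟩ := hA 0 N
  rw [h, zero_add]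
  exact add_mem hA (mul_mem (pow_mem hπK N) hN)

open Polynomial in
theorem pd_aeval_le {p : ℕ} [Fact p.Prime] [CharP Kv p] {K : Subfield Kv} {π : Kv}
    (hπ : Valued.v π < 1) (g : (pdFq p K)[X]) : Valued.v (aeval π g) ≤ 1 := by
  rw [aeval_eq_sum_range]
  refine Valuation.map_sum_le _ fun i _ => ?_
  rw [Subfield.smul_def, smul_eq_mul, map_mul, map_pow]
  exact mul_le_one' (pd_const_le (g.coeff i).2) (pow_le_one' hπ.le i)

open Polynomial in
theorem pd_divX {p : ℕ} [Fact p.Prime] [CharP Kv p] {K : Subfield Kv} {π : Kv} (hπ0 : π ≠ 0)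
    (hπ : Valued.v π < 1) {s : ℕ} {α : Fin s → Kv}
    (hα : ∀ i, Valued.v (α i) ≤ 1)
    (hindep : ∀ c : Fin s → Kv, (∀ i, c i ∈ ConstantField p K) →
      Valued.v (∑ i, c i * α i) ≤ Valued.v π → ∀ i, c i = 0)
    (g : Fin s → (pdFq p K)[X]) (y : Kv) (hy : Valued.v y ≤ 1)
    (h : ∑ i, aeval π (g i) * α i = π * y) :
    (∀ i, (g i).coeff 0 = 0) ∧ y = ∑ i, aeval π (divX (g i)) * α i := by
  have hg : ∀ i, aeval π (g i) = π * aeval π (divX (g i)) + ((g i).coeff 0 : Kv) := by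
    intro i
    conv_lhs => rw [← divX_mul_X_add (g i)]
    simp only [map_add, map_mul, aeval_X, aeval_C]
    rw [mul_comm]; rfl
  have h1 : ∑ i, ((g i).coeff 0 : Kv) * α i = π * (y - ∑ i, aeval π (divX (g i)) * α i) := by
    rw [mul_sub, ← h, Finset.mul_sum, ← Finset.sum_sub_distrib]
    refine Finset.sum_congr rfl fun i _ => ?_
    rw [hg i]; ring
  have h2 : ∀ i, ((g i).coeff 0 : Kv) = 0 := by
    refine hindep _ (fun i => ((g i).coeff 0).2) ?_
    rw [h1, map_mul]
    refine mul_le_of_le_one_right' ?_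
    refine (Valuation.map_sub _ _ _).trans (max_le hy ?_)
    refine Valuation.map_sum_le _ fun i _ => ?_
    rw [map_mul]
    exact mul_le_one' (pd_aeval_le hπ _) (hα i)
  refine ⟨fun i => Subtype.ext (h2 i), ?_⟩
  simp only [h2, zero_mul, Finset.sum_const_zero] at h1
  have := (mul_eq_zero.1 h1.symm).resolve_left hπ0
  exact sub_eq_zero.1 this

open Polynomial in
theorem pd_poly_indep {p : ℕ} [Fact p.Prime] [CharP Kv p] {K : Subfield Kv} {π : Kv} (hπ0 : π ≠ 0)
    (hπ : Valued.v π < 1) {s : ℕ} {α : Fin s → Kv}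
    (hα : ∀ i, Valued.v (α i) ≤ 1)
    (hindep : ∀ c : Fin s → Kv, (∀ i, c i ∈ ConstantField p K) →
      Valued.v (∑ i, c i * α i) ≤ Valued.v π → ∀ i, c i = 0)
    (k : ℕ) : ∀ (g : Fin s → (pdFq p K)[X]), ∑ i, aeval π (g i) * α i = 0 →
    ∀ i, (g i).coeff k = 0 := by
  induction k with
  | zero =>
    intro g h
    exact (pd_divX hπ0 hπ hα hindep g 0 (by simp) (by simpa using h)).1
  | succ k ih =>
    intro g h i
    have := (pd_divX hπ0 hπ hα hindep g 0 (by simp) (by simpa using h)).2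
    have := ih _ this.symm i
    rwa [coeff_divX] at this

open Polynomial in
theorem pd_rep (p : ℕ) [Fact p.Prime] [CharP Kv p] (K : Subfield Kv)
    (hK : IsGlobalFunctionFieldCompletion p K)
    (π : Kv) (hπ0 : π ≠ 0) (hπ : Valued.v π < 1)
    (hdeg : degOver (FqPi p K π) (K : Set Kv) = Module.rank ↥(FqPiCompletion p K π) Kv)
    (s : ℕ) (α : Fin s → Kv)
    (hα : ∀ i, α i ∈ K ∧ Valued.v (α i) ≤ 1)
    (hindep : ∀ c : Fin s → Kv, (∀ i, c i ∈ ConstantField p K) →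
      Valued.v (∑ i, c i * α i) ≤ Valued.v π → ∀ i, c i = 0)
    (hgen : ∀ x : Kv, x ∈ K → Valued.v x ≤ 1 →
      ∃ c : Fin s → Kv, (∀ i, c i ∈ ConstantField p K) ∧
        Valued.v (x - ∑ i, c i * α i) ≤ Valued.v π) (x : Kv) (hx : x ∈ K) :
    ∃ (Q : (pdFq p K)[X]) (u : Fin s → (pdFq p K)[X]), aeval π Q ≠ 0 ∧
      aeval π Q * x = ∑ i, aeval π (u i) * α i := by
  classical
  have hden : ∀ l : Fin s → FqPi p K π, ∃ (Q : (pdFq p K)[X]) (u : Fin s → (pdFq p K)[X]),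
      aeval π Q ≠ 0 ∧ ∀ i, aeval π Q * (l i : Kv) = aeval π (u i) := by
    intro l
    obtain ⟨z, hz, hz0, hzl⟩ := pd_common_denom _ (fun i => (l i : Kv)) (fun i => (l i).2)
    obtain ⟨Q, hQ⟩ := pd_closure_poly (pdFq p K) _ π (le_refl _) hz
    choose u hu using fun i => pd_closure_poly (pdFq p K) _ π (le_refl _) (hzl i)
    exact ⟨Q, u, by rwa [hQ], fun i => by rw [hQ, hu]⟩
  have hli : LinearIndependent (FqPi p K π) α := by
    rw [Fintype.linearIndependent_iff]
    intro l hl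
    obtain ⟨Q, u, hQ, hu⟩ := hden l
    have h1 : ∑ i, aeval π (u i) * α i = 0 := by
      have : ∑ i, aeval π Q * (l i • α i) = 0 := by rw [← Finset.mul_sum, hl, mul_zero]
      rw [← this]
      refine Finset.sum_congr rfl fun i _ => ?_
      rw [← hu, Subfield.smul_def, smul_eq_mul, mul_assoc]
    have h2 : ∀ i, u i = 0 := fun i => by
      ext k
      rw [pd_poly_indep hπ0 hπ (fun i => (hα i).2) hindep k u h1 i]; rfl
    intro i
    have := hu i
    rw [h2 i, map_zero] at this
    exact Subtype.ext ((mul_eq_zero.1 this).resolve_left hQ)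
  let W := Submodule.span (FqPi p K π) (K : Set Kv)
  let α' : Fin s → W := fun i => ⟨α i, Submodule.subset_span (hα i).1⟩
  have hli' : LinearIndependent (FqPi p K π) α' := LinearIndependent.of_comp W.subtype hli
  have hrank : Module.rank (FqPi p K π) W ≤ s := by
    have h0 : Module.rank (FqPi p K π) W = _ := hdeg
    rw [h0, ← rank_top, ← (show Submodule.span (FqPiCompletion p K π) (Set.range α) = ⊤ from
      eq_top_iff.2 fun x _ => pd_span p K hK π hπ0 hπ s α hgen x)]
    refine (rank_span_le _).trans ?_
    have := Cardinal.mk_range_le_lift (f := α)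
    simpa using this
  have hfree : Module.Free (FqPi p K π) W := Module.Free.of_divisionRing _ _
  have hfin : Module.Finite (FqPi p K π) W := by
    rw [← Module.rank_lt_aleph0_iff]
    exact hrank.trans_lt (Cardinal.natCast_lt_aleph0)
  have hspan : Submodule.span (FqPi p K π) (Set.range α') = ⊤ := by
    apply hli'.span_eq_top_of_card_eq_finrank'
    apply le_antisymm hli'.fintype_card_le_finrank
    rw [Fintype.card_fin]
    exact Module.finrank_le_of_rank_le hrank
  have hxW : (⟨x, Submodule.subset_span hx⟩ : W) ∈ Submodule.span (FqPi p K π) (Set.range α') := by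
    rw [hspan]; trivial
  obtain ⟨l, hl⟩ := (Submodule.mem_span_range_iff_exists_fun _).1 hxW
  have hl' : ∑ i, (l i : Kv) * α i = x := by
    have := congrArg W.subtype hl
    simpa [α', Subfield.smul_def] using this
  obtain ⟨Q, u, hQ, hu⟩ := hden l
  refine ⟨Q, u, hQ, ?_⟩
  rw [← hl', Finset.mul_sum]
  refine Finset.sum_congr rfl fun i _ => ?_
  rw [← hu, mul_assoc]

theorem pd_gamma_finite (p : ℕ) [Fact p.Prime] [CharP Kv p] (K : Subfield Kv)
    (hF : Finite (pdFq p K)) (π : Kv)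
    (Γ : Set Kv) (hΓ : IsCompleteSetOfReps π Γ) (hΓK : Γ ⊆ (K : Set Kv))
    (s : ℕ) (α : Fin s → Kv)
    (hgen : ∀ x : Kv, x ∈ K → Valued.v x ≤ 1 →
      ∃ c : Fin s → Kv, (∀ i, c i ∈ ConstantField p K) ∧
        Valued.v (x - ∑ i, c i * α i) ≤ Valued.v π) : Finite Γ := by
  choose c hc h using fun γ : Γ => hgen γ (hΓK γ.2) (hΓ.1 _ γ.2)
  let φ : Γ → (Fin s → pdFq p K) := fun γ i => ⟨c γ i, hc γ i⟩
  refine Finite.of_injective φ fun γ γ' he => ?_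
  have he' : c γ = c γ' := by
    ext i
    exact congrArg Subtype.val (congrFun he i)
  have h1 : Valued.v ((γ : Kv) - γ') ≤ Valued.v π := by
    have : (γ : Kv) - γ' = (γ - ∑ i, c γ i * α i) - (γ' - ∑ i, c γ' i * α i) := by
      rw [he']; ring
    rw [this]
    exact (Valuation.map_sub _ _ _).trans (max_le (h γ) (h γ'))
  obtain ⟨δ, _, hu⟩ := hΓ.2 γ (hΓ.1 _ γ.2)
  have e1 := hu γ ⟨γ.2, by simp⟩
  have e2 := hu γ' ⟨γ'.2, h1⟩
  exact Subtype.ext (e1.trans e2.symm)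

open Polynomial in
theorem pd_bounded_finite (p : ℕ) [Fact p.Prime] [CharP Kv p] (K : Subfield Kv)
    (hF : Finite (pdFq p K)) (π : Kv) (s : ℕ) (α : Fin s → Kv) (B : ℕ) :
    {y : Kv | ∃ u : Fin s → (pdFq p K)[X], (∀ i, (u i).natDegree ≤ B) ∧
      y = ∑ i, aeval π (u i) * α i}.Finite := by
  refine (Set.finite_range (fun c : Fin s → Fin (B + 1) → pdFq p K =>
    ∑ i, (∑ k, c i k • π ^ (k : ℕ)) * α i)).subset ?_
  rintro y ⟨u, hu, rfl⟩
  refine ⟨fun i k => (u i).coeff k, ?_⟩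
  refine Finset.sum_congr rfl fun i _ => ?_
  rw [aeval_eq_sum_range' (Nat.lt_succ_of_le (hu i)), Finset.sum_range]

end

/-- **Lemma 2.3.** Suppose `π ∈ A`, `Γ ⊆ A`, and `[K : 𝔽_q(π)] = [K_v : 𝔽_q((π))]`.
Let `α₁, …, α_{ef} ∈ A` have reductions modulo `πA` forming an `𝔽_q`-basis of
`A/πA`.  If `Γ ⊆ 𝔽_q[π] α₁ + ⋯ + 𝔽_q[π] α_{ef}`, then `(Γ, π)` has property A. -/
theorem propertyA_of_polynomial_digits
    {Kv : Type*} [Field Kv] [Valued Kv ZM0]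
    (p : ℕ) [Fact p.Prime] (K : Subfield Kv)
    (hK : IsGlobalFunctionFieldCompletion p K)
    (π : Kv) (hπ0 : π ≠ 0) (hπ : Valued.v π < 1) (hπK : π ∈ K)
    (Γ : Set Kv) (hΓ : IsCompleteSetOfReps π Γ) (hΓK : Γ ⊆ (K : Set Kv))
    (hdeg : degOver (FqPi p K π) (K : Set Kv) = Module.rank ↥(FqPiCompletion p K π) Kv)
    (s : ℕ) (α : Fin s → Kv)
    (hα : ∀ i, α i ∈ K ∧ Valued.v (α i) ≤ 1)
    (hindep : ∀ c : Fin s → Kv, (∀ i, c i ∈ ConstantField p K) →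
      Valued.v (∑ i, c i * α i) ≤ Valued.v π → ∀ i, c i = 0)
    (hgen : ∀ x : Kv, x ∈ K → Valued.v x ≤ 1 →
      ∃ c : Fin s → Kv, (∀ i, c i ∈ ConstantField p K) ∧
        Valued.v (x - ∑ i, c i * α i) ≤ Valued.v π)
    (hΓpoly : ∀ γ ∈ Γ, ∃ g : Fin s → Kv,
      (∀ i, g i ∈ PolyInPi p K π) ∧ γ = ∑ i, g i * α i) :
    HasPropertyA K π Γ := by
  classical
  have := hK.charP
  have hF := pd_finite p K hK
  have hΓfin := pd_gamma_finite p K hF π Γ hΓ hΓK s α hgen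
  -- polynomial representations of the digits
  have hG : ∀ γ : Γ, ∃ g : Fin s → Polynomial (pdFq p K),
      (γ : Kv) = ∑ i, Polynomial.aeval π (g i) * α i := by
    intro γ
    obtain ⟨g, hg, h⟩ := hΓpoly γ γ.2
    have : ∀ i, ∃ q : Polynomial (pdFq p K), Polynomial.aeval π q = g i := by
      intro i
      obtain ⟨N, c, hc, h⟩ := hg i
      refine ⟨∑ k ∈ Finset.range N, Polynomial.C (⟨c k, hc k⟩ : pdFq p K) * Polynomial.X ^ k, ?_⟩
      rw [h]
      simp only [map_sum, map_mul, map_pow, Polynomial.aeval_X, Polynomial.aeval_C]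
      rfl
    choose q hq using this
    exact ⟨q, by simpa only [hq] using h⟩
  choose G hG using hG
  obtain ⟨D, hD⟩ := (Set.finite_range (fun t : Γ × Fin s => (G t.1 t.2).natDegree)).bddAbove
  have hD' : ∀ γ i, (G γ i).natDegree ≤ D := fun γ i => hD ⟨(γ, i), rfl⟩
  intro x m a ⟨haΓ, hsum⟩
  have hbΓ : ∀ n : ℕ, a (m + n) ∈ Γ := fun n => haΓ _ (by lia)
  have hz : HasSum (fun n : ℕ => a (m + n) * π ^ n) (x * (π ^ m)⁻¹) := by
    refine (hsum.mul_right (π ^ m)⁻¹).congr_fun ?_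
    intro n
    rw [zpow_add₀ hπ0, zpow_natCast]
    have : π ^ m ≠ 0 := zpow_ne_zero _ hπ0
    field_simp
  obtain ⟨X, hX, hX0, hX1, hXs⟩ := pd_seq (b := fun n : ℕ => a (m + n)) hπ0 hπ
    (fun n => hΓ.1 _ (hbΓ n)) hz
  have hπm : π ^ m ∈ K := zpow_mem hπK m
  have hxK : x ∈ K ↔ X 0 ∈ K := by
    rw [hX0]
    refine ⟨fun h => mul_mem h (inv_mem hπm), fun h => ?_⟩
    have := mul_mem h hπm
    rwa [inv_mul_cancel_right₀ (zpow_ne_zero _ hπ0)] at this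
  rw [hxK]
  constructor
  · intro h0
    obtain ⟨Q, u, hQ, hu⟩ := pd_rep p K hK π hπ0 hπ hdeg s α hα hindep hgen _ h0
    obtain ⟨U, hU⟩ := (Set.finite_range (fun i : Fin s => (u i).natDegree)).bddAbove
    set B := max U (Q.natDegree + D) with hB
    have hrec : ∀ n, ∃ u : Fin s → Polynomial (pdFq p K), (∀ i, (u i).natDegree ≤ B) ∧
        Polynomial.aeval π Q * X n = ∑ i, Polynomial.aeval π (u i) * α i := by
      intro n
      induction n with
      | zero => exact ⟨u, fun i => (hU ⟨i, rfl⟩).trans (le_max_left _ _), hu⟩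
      | succ n ih =>
        obtain ⟨w, hw, h⟩ := ih
        have hg := hG ⟨_, hbΓ n⟩
        set g := G ⟨_, hbΓ n⟩ with hgdef
        have hd := (pd_divX hπ0 hπ (fun i => (hα i).2) hindep (fun i => w i - Q * g i)
          (Polynomial.aeval π Q * X (n + 1)) (by
            rw [map_mul]
            exact mul_le_one' (pd_aeval_le hπ _) (hX1 _)) (by
            simp only [map_sub, map_mul, sub_mul, Finset.sum_sub_distrib, mul_assoc]
            rw [← h, ← Finset.mul_sum, ← hg, hXs n]
            ring)).2
        refine ⟨_, fun i => ?_, hd⟩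
        rw [Polynomial.natDegree_divX_eq_natDegree_tsub_one]
        refine (Nat.sub_le _ _).trans ((Polynomial.natDegree_sub_le _ _).trans (max_le (hw i) ?_))
        refine Polynomial.natDegree_mul_le.trans (le_trans ?_ (le_max_right _ _))
        exact Nat.add_le_add_left (hD' _ i) _
    have hfin := (pd_bounded_finite p K hF π s α B).image (fun y => y / Polynomial.aeval π Q)
    have hmem : ∀ n, X n ∈ (fun y => y / Polynomial.aeval π Q) ''
        {y : Kv | ∃ u : Fin s → Polynomial (pdFq p K), (∀ i, (u i).natDegree ≤ B) ∧
          y = ∑ i, Polynomial.aeval π (u i) * α i} :=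
      fun n => ⟨Polynomial.aeval π Q * X n, hrec n, mul_div_cancel_left₀ _ hQ⟩
    obtain ⟨n, -, n', -, hne, heq⟩ := Set.infinite_univ.exists_ne_map_eq_of_mapsTo
      (fun n _ => hmem n) hfin
    obtain ⟨N, L, hL, hNL⟩ : ∃ N L : ℕ, 0 < L ∧ X (N + L) = X N := by
      rcases lt_or_gt_of_ne hne with h | h
      · exact ⟨n, n' - n, by lia, by rw [Nat.add_sub_cancel' h.le, heq]⟩
      · exact ⟨n', n - n', by lia, by rw [Nat.add_sub_cancel' h.le, heq]⟩
    have hdig : ∀ i j : ℕ, X i = X j → a (m + i) = a (m + j) := by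
      intro i j h
      have hv : ∀ i : ℕ, Valued.v (X i - a (m + i)) ≤ Valued.v π := by
        intro i
        have : X i - a (m + i) = π * X (i + 1) := by rw [hXs i]; ring
        rw [this, map_mul]
        exact mul_le_of_le_one_right' (hX1 _)
      obtain ⟨δ, _, hu⟩ := hΓ.2 (X i) (hX1 i)
      have e1 := hu _ ⟨hbΓ i, hv i⟩
      have e2 := hu _ ⟨hbΓ j, by rw [h]; exact hv j⟩
      exact e1.trans e2.symm
    have hper : ∀ j : ℕ, X (N + j + L) = X (N + j) := by
      intro j
      induction j with
      | zero => simpa using hNL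
      | succ j ih =>
        have h1 := hXs (N + j + L)
        have h2 := hXs (N + j)
        have h3 := hdig _ _ ih
        simp only [h3, ih] at h1
        rw [h1] at h2
        have h4 := mul_left_cancel₀ hπ0 (add_left_cancel h2)
        rw [← add_assoc, ← h4]
        congr 1; ring
    refine ⟨m + N, L, by lia, by lia, fun n hn => ?_⟩
    obtain ⟨j, rfl⟩ : ∃ j : ℕ, n = m + (N + j : ℕ) := ⟨(n - (m + N)).toNat, by lia⟩
    have := hdig _ _ (hper j)
    rw [← this]
    congr 1
    push_cast
    ring
  · rintro ⟨N, L, hN, hL, h⟩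
    refine pd_periodic_mem K hπ hπK (b := fun n : ℕ => a (m + n)) (fun n => hΓK (hbΓ n)) hX hXs
      (N := (N - m).toNat) (L := L.toNat) (by lia) ?_
    intro n hn
    have := h (m + n) (by lia)
    rw [← this]
    congr 1
    lia
end

section
/- If (Γ, π) has property B, then π and all elements of Γ are algebraic over K. -/
/-!
Common setup: `Kv` is a complete field equipped with a (normalized, `ℤ`-valued)
valuation `Valued.v : Kv → ℤₘ₀ = WithZero (Multiplicative ℤ)`, and `K` is a dense
subfield of `Kv` (so that `Kv` is the completion `K_v` of `K`).  The valuation is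
written multiplicatively: the additive valuation of `x` is `n` iff
`Valued.v x = ofAdd (-n)`; the valuation ring `A_v` is `{x | Valued.v x ≤ 1}` and
`π A_v = {x | Valued.v x ≤ Valued.v π}`.
-/

open scoped Multiplicative

variable {Kv : Type*} [Field Kv] [Valued Kv ZM0]

theorem geom_hasSum_aux {Kv : Type*} [Field Kv] [Valued Kv ZM0] [CompleteSpace Kv]
    (π : Kv) (hπ : Valued.v π < 1) : HasSum (fun n : ℕ => π ^ n) (1 - π)⁻¹ := by
  have ht : Filter.Tendsto (fun n : ℕ => π ^ n) Filter.atTop (nhds 0) :=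
    Valued.tendsto_zero_pow_of_v_lt_one hπ
  have : NonarchimedeanAddGroup Kv := ⟨fun U hU => by
    obtain ⟨γ, hγ⟩ := (Valued.mem_nhds_zero).1 hU
    refine ⟨⟨(Valued.v (R := Kv)).restrict.ltAddSubgroup γ, ?_⟩, ?_⟩
    · exact Valued.isOpen_ball Kv γ.1
    · exact hγ⟩
  have hs : Summable (fun n : ℕ => π ^ n) :=
    NonarchimedeanAddGroup.summable_of_tendsto_cofinite_zero (by
      rw [Nat.cofinite_eq_atTop]; exact ht)
  have h1 : π ≠ 1 := by
    rintro rfl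
    simp at hπ
  have h2 : (1 - π) ≠ 0 := sub_ne_zero.mpr h1.symm
  have h3 : ∑' n : ℕ, π ^ n = 1 + π * ∑' n : ℕ, π ^ n := by
    rw [← tsum_mul_left]
    conv_lhs => rw [hs.tsum_eq_zero_add]
    simp [pow_succ']
  have h4 : ∑' n : ℕ, π ^ n = (1 - π)⁻¹ := by
    apply eq_inv_of_mul_eq_one_left
    linear_combination h3
  rw [← h4]
  exact hs.hasSum

/-- **Lemma 3.1.** If `(Γ, π)` has property B, then `π` and all elements of `Γ`
are algebraic over `K`. -/
theorem algebraic_of_propertyB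
    {Kv : Type*} [Field Kv] [Valued Kv ZM0]
    (p : ℕ) [Fact p.Prime] (K : Subfield Kv)
    (hK : IsGlobalFunctionFieldCompletion p K)
    (π : Kv) (hπ0 : π ≠ 0) (hπ : Valued.v π < 1)
    (Γ : Set Kv) (hΓ : IsCompleteSetOfReps π Γ)
    (hB : HasPropertyB p K π Γ) :
    IsAlgebraic ↥K π ∧ ∀ γ ∈ Γ, IsAlgebraic ↥K γ := by
  have := hK.complete
  have hg := geom_hasSum_aux π hπ
  have h1 : π ≠ 1 := by
    rintro rfl
    simp at hπ
  have h2 : (1 - π) ≠ 0 := sub_ne_zero.mpr h1.symm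
  have key : ∀ γ ∈ Γ, ∀ m : ℤ, IsAlgebraic ↥K (γ * π ^ m * (1 - π)⁻¹) := by
    intro γ hγ m
    refine (hB _ m (fun _ => γ) ⟨fun _ _ => hγ, ?_⟩).2 ?_
    · have := hg.mul_left (γ * π ^ m)
      refine this.congr_fun ?_
      intro n
      rw [zpow_add₀ hπ0, zpow_natCast, mul_assoc]
    · refine (Set.finite_singleton (fun _ : ℕ => γ)).subset ?_
      rintro c ⟨i, j, -, rfl⟩
      rfl
  have hπa : IsAlgebraic ↥K π := by
    obtain ⟨γ, ⟨hγ, hv⟩, -⟩ := hΓ.2 1 (by simp)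
    have hγ0 : γ ≠ 0 := by
      rintro rfl
      simp only [sub_zero, map_one] at hv
      exact absurd hπ (not_lt.mpr hv)
    have := (key γ hγ 1).mul (key γ hγ 0).inv
    have e : γ * π ^ (1 : ℤ) * (1 - π)⁻¹ * (γ * π ^ (0 : ℤ) * (1 - π)⁻¹)⁻¹ = π := by
      rw [zpow_one, zpow_zero]
      field_simp
    rwa [e] at this
  refine ⟨hπa, fun γ hγ => ?_⟩
  have := (key γ hγ 0).mul (isAlgebraic_one.sub hπa)
  have e : γ * π ^ (0 : ℤ) * (1 - π)⁻¹ * (1 - π) = γ := by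
    rw [zpow_zero]
    field_simp
  rwa [e] at this
end

section
/- Assume π and all elements of Γ are algebraic over K. For x ∈ K_v, if the digit sequence of the expansion of x with respect to (Γ, π) is p-automatic, then x is algebraic over K. -/
/-!
Common setup: `Kv` is a complete field equipped with a (normalized, `ℤ`-valued)
valuation `Valued.v : Kv → ℤₘ₀ = WithZero (Multiplicative ℤ)`, and `K` is a dense
subfield of `Kv` (so that `Kv` is the completion `K_v` of `K`).  The valuation is
written multiplicatively: the additive valuation of `x` is `n` iff
`Valued.v x = ofAdd (-n)`; the valuation ring `A_v` is `{x | Valued.v x ≤ 1}` and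
`π A_v = {x | Valued.v x ≤ Valued.v π}`.
-/

open scoped Multiplicative

variable {Kv : Type*} [Field Kv] [Valued Kv ZM0]

theorem alg_core {L E : Type*} [Field L] [Field E] [Algebra L E] (p : ℕ) [Fact p.Prime]
    [CharP E p] {ι : Type*} [Fintype ι] (f : ι → E)
    (h : ∀ c, f c ∈ Submodule.span L (Set.range fun d => f d ^ p)) (c : ι) :
    IsAlgebraic L (f c) := by
  have step : ∀ i : ℕ, Submodule.span L (Set.range fun d => f d ^ p ^ i) ≤
      Submodule.span L (Set.range fun d => f d ^ p ^ (i + 1)) := by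
    intro i
    rw [Submodule.span_le]
    rintro _ ⟨d, rfl⟩
    obtain ⟨l, hl⟩ := (Submodule.mem_span_range_iff_exists_fun L).1 (h d)
    refine (Submodule.mem_span_range_iff_exists_fun L).2 ⟨fun e => l e ^ p ^ i, ?_⟩
    simp only
    rw [← hl, sum_pow_char_pow]
    refine Finset.sum_congr rfl fun e _ => ?_
    rw [smul_pow, ← pow_mul, pow_succ' p i]
  have mono := monotone_nat_of_le_succ step
  by_contra htr
  set N := Fintype.card ι
  have hli : LinearIndependent L (fun i : Fin (N + 1) => f c ^ p ^ (i : ℕ)) := by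
    have h1 : LinearIndependent L (fun n : ℕ => f c ^ n) := by
      have h2 := (Polynomial.basisMonomials L).linearIndependent.map'
        (Polynomial.aeval (f c)).toLinearMap
        (LinearMap.ker_eq_bot.2 (transcendental_iff_injective.1 htr))
      have h3 : (fun n : ℕ => f c ^ n) = (Polynomial.aeval (f c)).toLinearMap ∘
          (Polynomial.basisMonomials L) := by
        ext n
        simp
      rw [h3]
      exact h2
    refine h1.comp (fun i : Fin (N + 1) => p ^ (i : ℕ)) ?_
    intro i j hij
    exact Fin.ext (Nat.pow_right_injective (Fact.out : p.Prime).two_le hij)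
  let V := Submodule.span L (Set.range fun d => f d ^ p ^ N)
  have hmem : ∀ i : Fin (N + 1), f c ^ p ^ (i : ℕ) ∈ V := fun i =>
    mono (Nat.lt_succ_iff.1 i.2) (Submodule.subset_span ⟨c, rfl⟩)
  have hli' : LinearIndependent L (fun i : Fin (N + 1) => (⟨_, hmem i⟩ : V)) :=
    LinearIndependent.of_comp V.subtype hli
  have : Module.Finite L V := Module.Finite.span_of_finite L (Set.finite_range _)
  have h3 := hli'.fintype_card_le_finrank
  have h4 : Module.finrank L V ≤ N := finrank_range_le_card _
  simp at h3
  omega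

theorem summable_aux {E : Type*} [Field E] [Valued E ZM0] [CompleteSpace E] (π : E)
    (hπ : Valued.v π < 1) (c : ℕ → E) (hc : ∀ n, c n = 0 ∨ c n = 1) :
    Summable fun n => c n * π ^ n := by
  have : NonarchimedeanAddGroup E := by
    have h := (Valued.v (R := E)).subgroups_basis.nonarchimedean
    have h2 : (Valued.v (R := E)).subgroups_basis.topology =
        (inferInstance : TopologicalSpace E) := by
      rw [Valued.toUniformSpace_eq E ZM0]
      rfl
    rw [h2] at h
    infer_instance
  apply NonarchimedeanAddGroup.summable_of_tendsto_cofinite_zero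
  rw [Nat.cofinite_eq_atTop]
  have h0 : Filter.Tendsto (fun n : ℕ => π ^ n) Filter.atTop (nhds 0) :=
    Valued.tendsto_zero_pow_of_v_lt_one hπ
  intro s hs
  have h1 : ∀ᶠ n : ℕ in Filter.atTop, π ^ n ∈ s := h0 hs
  change ∀ᶠ n : ℕ in Filter.atTop, c n * π ^ n ∈ s
  have hz : (0 : E) ∈ s := mem_of_mem_nhds hs
  filter_upwards [h1] with n hn
  rcases hc n with h | h <;> simp [h, hz]
  simpa using hn

theorem indicator_alg {E : Type*} [Field E] [Valued E ZM0] [CompleteSpace E] (p : ℕ)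
    [Fact p.Prime] [CharP E p] (L : Type*) [Field L] [Algebra L E] (π : E)
    (hπ : Valued.v π < 1) (ϖ : L) (hϖ : algebraMap L E ϖ = π)
    (S : Set (ℕ → E)) (hS : S.Finite) (h01 : ∀ c ∈ S, ∀ n, c n = 0 ∨ c n = 1)
    (hcl : ∀ c ∈ S, ∀ j < p, (fun n => c (j + p * n)) ∈ S) (c : ℕ → E) (hc : c ∈ S) :
    IsAlgebraic L (∑' n, c n * π ^ n) := by
  have := hS.fintype
  have : NeZero p := ⟨(Fact.out : p.Prime).ne_zero⟩
  refine alg_core (L := L) p (fun c : S => ∑' n, c.1 n * π ^ n) ?_ ⟨c, hc⟩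
  rintro ⟨c, hc⟩
  simp only
  rw [Nat.sumByResidueClasses (summable_aux π hπ c (h01 c hc)) p]
  refine Submodule.sum_mem _ fun j _ => ?_
  have hm := hcl c hc j.val (ZMod.val_lt j)
  have key : ∑' m, c (j.val + p * m) * π ^ (j.val + p * m) =
      ϖ ^ j.val • (∑' m, c (j.val + p * m) * π ^ m) ^ p := by
    have hs := (summable_aux π hπ _ (h01 _ hm)).hasSum
    have h2 := hs.map (frobenius E p) (by
      change Continuous fun x : E => x ^ p
      fun_prop)
    have h3 := h2.mul_left (π ^ j.val)
    rw [Algebra.smul_def, map_pow, hϖ]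
    rw [← frobenius_def p, ← h3.tsum_eq]
    refine tsum_congr fun m => ?_
    simp only [Function.comp, frobenius_def, mul_pow]
    rcases h01 _ hm m with h | h <;> simp only [h]
    · simp [(Fact.out : p.Prime).ne_zero]
    · rw [pow_add, pow_mul, ← pow_mul, ← pow_mul, mul_comm m p]
      simp
  rw [key]
  exact Submodule.smul_mem _ _ (Submodule.subset_span ⟨⟨_, hm⟩, rfl⟩)

/-- **Lemma 3.2.** Assume `π` and all elements of `Γ` are algebraic over `K`.
If the digit sequence of the expansion of `x ∈ K_v` with respect to `(Γ, π)` is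
`p`-automatic, then `x` is algebraic over `K`. -/
theorem algebraic_of_automatic_expansion
    {Kv : Type*} [Field Kv] [Valued Kv ZM0]
    (p : ℕ) [Fact p.Prime] (K : Subfield Kv)
    (hK : IsGlobalFunctionFieldCompletion p K)
    (π : Kv) (hπ0 : π ≠ 0) (hπ : Valued.v π < 1)
    (Γ : Set Kv) (hΓ : IsCompleteSetOfReps π Γ)
    (hπalg : IsAlgebraic ↥K π) (hΓalg : ∀ γ ∈ Γ, IsAlgebraic ↥K γ)
    (x : Kv) (m : ℤ) (a : ℤ → Kv) (hexp : IsExpansion π Γ m a x)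
    (hauto : IsKAutomatic p fun n : ℕ => a (m + n)) :
    IsAlgebraic ↥K x := by
  classical
  have := hK.charP
  have := hK.complete
  have hp : p.Prime := Fact.out
  obtain ⟨hdig, hsum⟩ := hexp
  set b : ℕ → Kv := fun n => a (m + n) with hb
  set Ker := {c : ℕ → Kv | ∃ i j : ℕ, j < p ^ i ∧ c = fun n => b (n * p ^ i + j)} with hKer
  have hfin : Ker.Finite := hauto
  have hbK : b ∈ Ker := ⟨0, 0, by simp, by ext n; simp⟩
  have hKcl : ∀ c ∈ Ker, ∀ j < p, (fun n => c (j + p * n)) ∈ Ker := by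
    rintro _ ⟨i, k, hk, rfl⟩ j hj
    refine ⟨i + 1, j * p ^ i + k, ?_, ?_⟩
    · calc j * p ^ i + k < j * p ^ i + p ^ i := by omega
        _ = (j + 1) * p ^ i := by ring
        _ ≤ p * p ^ i := Nat.mul_le_mul_right _ hj
        _ = p ^ (i + 1) := by ring
    · ext n
      simp only
      congr 1
      ring
  have hval : (Set.range b).Finite := by
    refine (hfin.image fun c => c 0).subset ?_
    rintro _ ⟨n, rfl⟩
    exact ⟨_, ⟨n, n, Nat.lt_pow_self hp.one_lt, rfl⟩, by simp⟩
  let L := algebraicClosure K Kv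
  have hπL : π ∈ L := mem_algebraicClosure_iff.2 hπalg
  let F : Kv → Kv := fun γ => ∑' n, (if b n = γ then (1 : Kv) else 0) * π ^ n
  have hFL : ∀ γ, IsAlgebraic L (F γ) := by
    intro γ
    refine indicator_alg p L π hπ ⟨π, hπL⟩ rfl
      ((fun (c : ℕ → Kv) (n : ℕ) => if c n = γ then (1 : Kv) else 0) '' Ker) (hfin.image _)
      ?_ ?_ _ ⟨b, hbK, rfl⟩
    · rintro _ ⟨c, hc, rfl⟩ n
      by_cases h : c n = γ <;> simp [h]
    · rintro _ ⟨c, hc, rfl⟩ j hj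
      exact ⟨_, hKcl c hc j hj, rfl⟩
  have hFK : ∀ γ, F γ ∈ L := fun γ => mem_algebraicClosure_iff.2 ((hFL γ).restrictScalars K)
  have hx : x = π ^ m * ∑ γ ∈ hval.toFinset, γ * F γ := by
    refine hsum.unique ?_
    have h1 : HasSum (fun n => ∑ γ ∈ hval.toFinset,
        γ * ((if b n = γ then (1 : Kv) else 0) * π ^ n)) (∑ γ ∈ hval.toFinset, γ * F γ) := by
      refine hasSum_sum fun γ _ => HasSum.mul_left _ (Summable.hasSum ?_)
      refine summable_aux π hπ _ fun n => ?_
      by_cases h : b n = γ <;> simp [h]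
    have h2 := h1.mul_left (π ^ m)
    suffices h3 : ∀ n : ℕ, a (m + n) * π ^ (m + (n : ℤ)) = π ^ m * ∑ γ ∈ hval.toFinset,
        γ * ((if b n = γ then (1 : Kv) else 0) * π ^ n) by
      rw [funext h3]
      exact h2
    intro n
    rw [Finset.sum_eq_single (b n)]
    · simp only [hb, if_true, one_mul]
      rw [zpow_add₀ hπ0, zpow_natCast]
      ring
    · intro γ _ hne
      simp [hne.symm]
    · intro h
      exact absurd (hval.mem_toFinset.2 ⟨n, rfl⟩) h
  rw [← mem_algebraicClosure_iff]
  change x ∈ L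
  rw [hx]
  refine L.mul_mem (zpow_mem hπL m) (sum_mem fun γ hγ => L.mul_mem ?_ (hFK γ))
  obtain ⟨n, rfl⟩ := hval.mem_toFinset.1 hγ
  exact mem_algebraicClosure_iff.2 (hΓalg _ (hdig _ (by omega)))
end

section
/- Suppose Γ is additively closed. Then (Γ, π) has property B if and only if π and all elements of Γ are algebraic over K. -/
/-!
Common setup: `Kv` is a complete field equipped with a (normalized, `ℤ`-valued)
valuation `Valued.v : Kv → ℤₘ₀ = WithZero (Multiplicative ℤ)`, and `K` is a dense
subfield of `Kv` (so that `Kv` is the completion `K_v` of `K`).  The valuation is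
written multiplicatively: the additive valuation of `x` is `n` iff
`Valued.v x = ofAdd (-n)`; the valuation ring `A_v` is `{x | Valued.v x ≤ 1}` and
`π A_v = {x | Valued.v x ≤ Valued.v π}`.
-/

open scoped Multiplicative

variable {Kv : Type*} [Field Kv] [Valued Kv ZM0]

section ChristolForward
open PowerSeries

/-- Cartier operator on power series. -/
noncomputable def cartier (p j : ℕ) (f : PowerSeries (ZMod p)) : PowerSeries (ZMod p) :=
  PowerSeries.mk fun n => coeff (p * n + j) f

noncomputable def cartierPoly (p j : ℕ) (f : Polynomial (ZMod p)) : Polynomial (ZMod p) :=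
  ∑ n ∈ Finset.range (f.natDegree + 1), Polynomial.monomial n (f.coeff (p * n + j))

variable (p : ℕ) [hp : Fact p.Prime]

lemma coeff_pow_char (h : PowerSeries (ZMod p)) (n : ℕ) :
    coeff n (h ^ p) = if p ∣ n then coeff (n / p) h else 0 := by
  have e : h ^ p = h.expand p hp.out.ne_zero := by
    have := MvPowerSeries.map_frobenius_expand p hp.out.ne_zero (R := ZMod p) (σ := Unit) (f := h)
    rw [ZMod.frobenius_zmod] at this
    rw [← this, MvPowerSeries.map_id]
    rfl
  rw [e, coeff_expand]

lemma cartier_add (j : ℕ) (f g : PowerSeries (ZMod p)) :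
    cartier p j (f + g) = cartier p j f + cartier p j g := by
  ext n; simp [cartier]

lemma cartier_sum {ι : Type*} (s : Finset ι) (j : ℕ) (f : ι → PowerSeries (ZMod p)) :
    cartier p j (∑ i ∈ s, f i) = ∑ i ∈ s, cartier p j (f i) := by
  ext n; simp [cartier]

lemma cartier_X_mul_pow (i j : ℕ) (hi : i < p) (hj : j < p) (h : PowerSeries (ZMod p)) :
    cartier p j (X ^ i * h ^ p) = if i = j then h else 0 := by
  ext n
  have hp0 := hp.out.pos
  simp only [cartier, coeff_mk, coeff_X_pow_mul', coeff_pow_char]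
  split_ifs with h1 h2 h3 h3
  · subst h3; simp [hp0]
  · exfalso
    obtain ⟨c, hc⟩ := h2
    have : (p * n + j) % p = (p * c + i) % p := by congr 1; omega
    simp [Nat.mod_eq_of_lt, hi, hj] at this
    exact h3 this.symm
  · subst h3; simp at h2
  · simp
  · omega
  · simp

lemma cartier_decomp (f : PowerSeries (ZMod p)) :
    f = ∑ j ∈ Finset.range p, X ^ j * cartier p j f ^ p := by
  ext n
  have hp0 := hp.out.pos
  simp only [map_sum, coeff_X_pow_mul', coeff_pow_char]
  rw [Finset.sum_eq_single (n % p)]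
  · have h1 : n % p ≤ n := Nat.mod_le _ _
    have h2 : p ∣ n - n % p := Nat.dvd_sub_mod n
    simp only [h1, h2, if_true, cartier, coeff_mk]
    congr 2
    rw [Nat.mul_div_cancel' h2]; omega
  · intro j hj hne
    split_ifs with h1 h2
    · exfalso
      obtain ⟨c, hc⟩ := h2
      apply hne
      have : n = p * c + j := by omega
      rw [this, Nat.mul_add_mod, Nat.mod_eq_of_lt (Finset.mem_range.1 hj)]
    · rfl
    · rfl
  · intro h; exact absurd (Finset.mem_range.2 (Nat.mod_lt _ hp0)) h

lemma cartier_mul_pow (j : ℕ) (hj : j < p) (f g : PowerSeries (ZMod p)) :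
    cartier p j (f * g ^ p) = cartier p j f * g := by
  have : f * g ^ p = ∑ i ∈ Finset.range p, X ^ i * (cartier p i f * g) ^ p := by
    conv_lhs => rw [cartier_decomp p f]
    rw [Finset.sum_mul]
    exact Finset.sum_congr rfl fun i _ => by ring
  rw [this, cartier_sum, Finset.sum_eq_single j]
  · rw [cartier_X_mul_pow p j j hj hj, if_pos rfl]
  · intro i hi hne
    rw [cartier_X_mul_pow p i j (Finset.mem_range.1 hi) hj, if_neg hne]
  · intro h; exact absurd (Finset.mem_range.2 hj) h

lemma coeff_cartierPoly (j : ℕ) (f : Polynomial (ZMod p)) (n : ℕ) :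
    (cartierPoly p j f).coeff n = f.coeff (p * n + j) := by
  simp only [cartierPoly, Polynomial.finsetSum_coeff, Polynomial.coeff_monomial]
  rw [Finset.sum_ite_eq']
  split_ifs with h
  · rfl
  · symm; apply Polynomial.coeff_eq_zero_of_natDegree_lt
    simp at h
    have := hp.out.pos
    nlinarith

lemma coe_cartierPoly (j : ℕ) (f : Polynomial (ZMod p)) :
    ((cartierPoly p j f : Polynomial (ZMod p)) : PowerSeries (ZMod p)) = cartier p j f := by
  ext n; simp [coeff_cartierPoly, cartier]

/-- iterated cartier operators see the kernel -/
lemma kernel_mem (y : PowerSeries (ZMod p)) (T : Set (PowerSeries (ZMod p))) (hy : y ∈ T)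
    (hT : ∀ g ∈ T, ∀ j < p, cartier p j g ∈ T) (i j : ℕ) (hj : j < p ^ i) :
    (PowerSeries.mk fun n => coeff (n * p ^ i + j) y) ∈ T := by
  induction i generalizing j with
  | zero =>
    simp at hj; subst hj
    convert hy using 1; ext n; simp
  | succ i ih =>
    have hp0 := hp.out.pos
    have hpi : 0 < p ^ i := pow_pos hp0 i
    have h1 := ih (j % p ^ i) (Nat.mod_lt _ hpi)
    have h2 : j / p ^ i < p := by
      rw [Nat.div_lt_iff_lt_mul hpi]; rwa [pow_succ, mul_comm] at hj
    convert hT _ h1 _ h2 using 1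
    ext n
    simp only [cartier, coeff_mk]
    congr 2
    have := Nat.mod_add_div j (p ^ i)
    rw [pow_succ]
    calc n * (p ^ i * p) + j = n * (p ^ i * p) + (j % p ^ i + p ^ i * (j / p ^ i)) := by rw [this]
      _ = _ := by ring

lemma automatic_of_finite (y : PowerSeries (ZMod p)) (T : Set (PowerSeries (ZMod p)))
    (hfin : T.Finite) (hy : y ∈ T)
    (hT : ∀ g ∈ T, ∀ j < p, cartier p j g ∈ T) :
    IsKAutomatic p (fun n => coeff n y) := by
  refine (hfin.image (fun g => fun n => coeff n g)).subset ?_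
  rintro c ⟨i, j, hj, rfl⟩
  exact ⟨_, kernel_mem p y T hy hT i j hj, by ext n; simp⟩

/-- reduce to nonzero linear coefficient -/
lemma ore_normalize (y : PowerSeries (ZMod p)) (s : ℕ) :
    ∀ c : ℕ → Polynomial (ZMod p), (∃ k ≤ s, c k ≠ 0) →
    ∑ k ∈ Finset.range (s + 1), (c k : PowerSeries (ZMod p)) * y ^ p ^ k = 0 →
    ∃ s' : ℕ, ∃ c' : ℕ → Polynomial (ZMod p), c' 0 ≠ 0 ∧
      ∑ k ∈ Finset.range (s' + 1), (c' k : PowerSeries (ZMod p)) * y ^ p ^ k = 0 := by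
  induction s with
  | zero =>
    rintro c ⟨k, hk, hc⟩ h
    obtain rfl : k = 0 := by omega
    exact ⟨0, c, hc, h⟩
  | succ s ih =>
    rintro c ⟨k, hk, hc⟩ h
    by_cases h0 : c 0 = 0
    · have hk0 : k ≠ 0 := by rintro rfl; exact hc h0
      obtain ⟨k, rfl⟩ := Nat.exists_eq_succ_of_ne_zero hk0
      obtain ⟨j, hj, hne⟩ : ∃ j < p, cartierPoly p j (c (k + 1)) ≠ 0 := by
        by_contra! hcon
        apply hc
        have := cartier_decomp p (c (k + 1) : PowerSeries (ZMod p))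
        rw [Finset.sum_eq_zero] at this
        · exact_mod_cast this
        · intro j hj
          rw [← coe_cartierPoly, hcon j (Finset.mem_range.1 hj)]
          simp [hp.out.ne_zero]
      apply ih (fun k => cartierPoly p j (c (k + 1))) ⟨k, by omega, hne⟩
      rw [Finset.sum_range_succ', h0] at h
      simp only [Polynomial.coe_zero, zero_mul, add_zero] at h
      have h' := congrArg (cartier p j) h
      rw [cartier_sum] at h'
      have z : cartier p j (0 : PowerSeries (ZMod p)) = 0 := by ext n; simp [cartier]
      rw [z] at h'
      rw [← h']
      refine Finset.sum_congr rfl fun k _ => ?_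
      rw [pow_succ, pow_mul, cartier_mul_pow p j hj, coe_cartierPoly]
    · exact ⟨s + 1, c, h0, h⟩

lemma natDegree_cartierPoly_le (j : ℕ) (f : Polynomial (ZMod p)) (D : ℕ)
    (hf : f.natDegree ≤ p * D) : (cartierPoly p j f).natDegree ≤ D := by
  rw [Polynomial.natDegree_le_iff_coeff_eq_zero]
  intro n hn
  rw [coeff_cartierPoly]
  apply Polynomial.coeff_eq_zero_of_natDegree_lt
  have := hp.out.pos
  nlinarith

theorem christol_forward (y : PowerSeries (ZMod p)) (s : ℕ)
    (c : ℕ → Polynomial (ZMod p)) (hc : ∃ k ≤ s, c k ≠ 0)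
    (h : ∑ k ∈ Finset.range (s + 1), (c k : PowerSeries (ZMod p)) * y ^ p ^ k = 0) :
    IsKAutomatic p (fun n => coeff n y) := by
  obtain ⟨s, c, hc, h⟩ := ore_normalize p y s c hc h
  obtain ⟨D, hD⟩ : ∃ D, ∀ k ∈ Finset.range (s + 1), (c k).natDegree ≤ D :=
    ⟨(Finset.range (s + 1)).sup fun k => (c k).natDegree, fun k hk =>
      Finset.le_sup (f := fun k => (c k).natDegree) hk⟩
  have hD0 : (c 0).natDegree ≤ D := hD 0 (by simp)
  let T : Set (PowerSeries (ZMod p)) := {g | ∃ d : ℕ → Polynomial (ZMod p),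
    (∀ k ∈ Finset.range (s + 1), (d k).natDegree ≤ D) ∧ (c 0 : PowerSeries (ZMod p)) * g =
      ∑ k ∈ Finset.range (s + 1), (d k : PowerSeries (ZMod p)) * y ^ p ^ k}
  have hc0 : (c 0 : PowerSeries (ZMod p)) ≠ 0 := by exact_mod_cast hc
  apply automatic_of_finite p y T
  · -- finiteness
    have hP : Finite (Polynomial.degreeLT (ZMod p) (D + 1)) :=
      Finite.of_equiv _ (Polynomial.degreeLTEquiv (ZMod p) (D + 1)).symm.toEquiv
    let F : (Fin (s + 1) → Polynomial.degreeLT (ZMod p) (D + 1)) → PowerSeries (ZMod p) :=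
      fun d => ∑ k, ((d k : Polynomial (ZMod p)) : PowerSeries (ZMod p)) * y ^ p ^ (k : ℕ)
    refine Set.Finite.of_finite_image (f := fun g => (c 0 : PowerSeries (ZMod p)) * g)
      ((Set.finite_range F).subset ?_) ?_
    · rintro _ ⟨g, ⟨d, hd, hg⟩, rfl⟩
      refine ⟨fun k => ⟨d k, ?_⟩, ?_⟩
      · rw [Polynomial.mem_degreeLT]
        refine lt_of_le_of_lt Polynomial.degree_le_natDegree ?_
        have := hd k (Finset.mem_range.2 k.2)
        exact_mod_cast Nat.lt_succ_of_le this
      · simp only [F]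
        rw [hg, Finset.sum_range]
    · intro a _ b _ hab
      exact mul_left_cancel₀ hc0 hab
  · refine ⟨fun k => if k = 0 then c 0 else 0, ?_, ?_⟩
    · intro k _; dsimp only; split_ifs
      · exact hD0
      · simp
    · rw [Finset.sum_eq_single 0]
      · simp
      · intro k _ hk; simp [hk]
      · simp
  · rintro g ⟨d, hd, hg⟩ j hj
    obtain ⟨q, hq⟩ : ∃ q, p = q + 2 := ⟨p - 2, by have := hp.out.two_le; omega⟩
    refine ⟨fun k => if k = s then 0 else cartierPoly p j
      (c 0 ^ (p - 1) * d (k + 1) - c 0 ^ (p - 2) * d 0 * c (k + 1)), ?_, ?_⟩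
    · intro k hk
      dsimp only; split_ifs with hks
      · simp
      have hk1 : k + 1 ∈ Finset.range (s + 1) := by simp at hk ⊢; omega
      apply natDegree_cartierPoly_le
      have e2 : p - 1 = q + 1 := by omega
      have e3 : p - 2 = q := by omega
      have e5 : p * D = (q + 2) * D := congrArg (· * D) hq
      have a1 : (c 0 ^ (p - 1)).natDegree ≤ (q + 1) * D := by
        refine Polynomial.natDegree_pow_le.trans ?_
        rw [e2]; exact Nat.mul_le_mul_left _ hD0
      have a2 : (c 0 ^ (p - 2)).natDegree ≤ q * D := by
        refine Polynomial.natDegree_pow_le.trans ?_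
        rw [e3]; exact Nat.mul_le_mul_left _ hD0
      have a3 := hd _ hk1
      have a4 := hD _ hk1
      have a5 := hd 0 (by simp)
      refine (Polynomial.natDegree_sub_le _ _).trans (max_le ?_ ?_)
      · refine Polynomial.natDegree_mul_le.trans ?_
        rw [e5]; nlinarith
      · refine Polynomial.natDegree_mul_le.trans ?_
        have := Polynomial.natDegree_mul_le (p := c 0 ^ (p - 2)) (q := d 0)
        rw [e5]; nlinarith
    · have e1 : g * (c 0 : PowerSeries (ZMod p)) ^ p = ∑ k ∈ Finset.range s,
          ((c 0 ^ (p - 1) * d (k + 1) - c 0 ^ (p - 2) * d 0 * c (k + 1) : Polynomial (ZMod p)) :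
            PowerSeries (ZMod p)) * (y ^ p ^ k) ^ p := by
        rw [Finset.sum_range_succ'] at h hg
        have hy : (c 0 : PowerSeries (ZMod p)) * y = - ∑ k ∈ Finset.range s,
          (c (k + 1) : PowerSeries (ZMod p)) * y ^ p ^ (k + 1) := by
          simp only [pow_zero, pow_one] at h
          linear_combination h
        have : g * (c 0 : PowerSeries (ZMod p)) ^ p = (c 0 : PowerSeries (ZMod p)) ^ (p - 1) *
          (∑ k ∈ Finset.range s, (d (k + 1) : PowerSeries (ZMod p)) * y ^ p ^ (k + 1)) +
          (c 0 : PowerSeries (ZMod p)) ^ (p - 2) * d 0 * - ∑ k ∈ Finset.range s,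
          (c (k + 1) : PowerSeries (ZMod p)) * y ^ p ^ (k + 1) := by
          rw [← hy]
          simp only [pow_zero, pow_one] at hg
          have e2 : p - 1 = q + 1 := by omega
          have e3 : p - 2 = q := by omega
          rw [e2, e3]
          have e4 : (c 0 : PowerSeries (ZMod p)) ^ p = (c 0 : PowerSeries (ZMod p)) ^ (q + 1) * c 0 := by
            rw [← pow_succ]; congr 1
          rw [e4]
          linear_combination (c 0 : PowerSeries (ZMod p)) ^ (q + 1) * hg
        rw [this, mul_neg, ← sub_eq_add_neg, Finset.mul_sum, Finset.mul_sum,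
          ← Finset.sum_sub_distrib]
        refine Finset.sum_congr rfl fun k _ => ?_
        push_cast
        rw [pow_succ p k, pow_mul y]
        ring
      have e2 := congrArg (cartier p j) e1
      rw [cartier_mul_pow p j hj, cartier_sum] at e2
      rw [mul_comm, e2, Finset.sum_range_succ]
      simp only [if_true, Polynomial.coe_zero, zero_mul, add_zero]
      refine Finset.sum_congr rfl fun k hk => ?_
      rw [cartier_mul_pow p j hj, if_neg (Finset.mem_range.1 hk).ne, coe_cartierPoly]

end ChristolForward

section RankBound

theorem sep_deg_bound {M0 M T V : Type*} [Field M0] [Field M] [Field T] [Field V]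
    [Algebra M0 M] [Algebra M0 T] [Algebra M V] [Algebra T V] [Algebra M0 V]
    [IsScalarTower M0 M V] [IsScalarTower M0 T V] [FiniteDimensional M V]
    [Algebra.IsAlgebraic M0 T]
    (hcl : ∀ m : M, IsIntegral M0 m → m ∈ (algebraMap M0 M).range) (t : T)
    (S : IntermediateField M V) (hS : Algebra.IsSeparable M S) (ht : algebraMap T V t ∈ S) :
    IsSeparable M0 t ∧ (minpoly M0 t).natDegree ≤ Module.finrank M S := by
  set x : V := algebraMap T V t with hx
  have hxint : IsIntegral M x := .of_finite M x
  have htint : IsIntegral M0 t := (Algebra.IsAlgebraic.isAlgebraic t).isIntegral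
  have hdvd : minpoly M x ∣ (minpoly M0 t).map (algebraMap M0 M) := by
    apply minpoly.dvd
    rw [Polynomial.aeval_map_algebraMap, hx, Polynomial.aeval_algebraMap_apply, minpoly.aeval,
      map_zero]
  have hlift : minpoly M x ∈ Polynomial.lifts (algebraMap M0 M) := by
    rw [Polynomial.lifts_iff_coeff_lifts]
    intro n
    exact hcl _ (Polynomial.isIntegral_coeff_of_dvd _ _ (minpoly.monic htint)
      (minpoly.monic hxint) hdvd n)
  obtain ⟨q0, hq0, hdeg, hmon⟩ := Polynomial.lifts_and_natDegree_eq_and_monic hlift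
    (minpoly.monic hxint)
  have hd0 : minpoly M0 t ∣ q0 := by
    apply minpoly.dvd
    apply (algebraMap T V).injective
    rw [map_zero, ← Polynomial.aeval_algebraMap_apply, ← Polynomial.aeval_map_algebraMap M, hq0,
      minpoly.aeval]
  have hxS : minpoly M x = minpoly M (⟨x, ht⟩ : S) := by
    rw [← minpoly.algebraMap_eq (A := M) (B := S) (B' := V) (algebraMap S V).injective]
    rfl
  constructor
  · have h1 : (minpoly M x).Separable := by
      rw [hxS]; exact Algebra.IsSeparable.isSeparable M _
    rw [← hq0, Polynomial.separable_map] at h1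
    exact h1.of_dvd hd0
  · refine (Polynomial.natDegree_le_of_dvd hd0 hmon.ne_zero).trans ?_
    rw [hdeg, hxS]
    exact minpoly.natDegree_le _

theorem rank_le_of_deg_bound {M0 T : Type*} [Field M0] [Field T] [Algebra M0 T] (d : ℕ)
    (h : ∀ t : T, IsSeparable M0 t ∧ (minpoly M0 t).natDegree ≤ d) :
    Module.rank M0 T ≤ d := by
  apply rank_le
  intro s hs
  let E := IntermediateField.adjoin M0 (s : Set T)
  have : Algebra.IsSeparable M0 T := ⟨fun t => (h t).1⟩
  have : FiniteDimensional M0 E := by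
    apply IntermediateField.finiteDimensional_adjoin
    intro x _
    exact (h x).1.isIntegral
  obtain ⟨a, ha⟩ := Field.exists_primitive_element M0 E
  have h1 : Module.finrank M0 E ≤ d := by
    have e1 := IntermediateField.adjoin.finrank (K := M0) (x := a) (.of_finite M0 a)
    rw [ha, IntermediateField.finrank_top'] at e1
    rw [e1]
    rw [← minpoly.algebraMap_eq (A := M0) (B := E) (B' := T) (algebraMap E T).injective]
    exact (h _).2
  refine le_trans ?_ h1
  have hs' : LinearIndependent M0 (fun i : s => (⟨i.1, IntermediateField.subset_adjoin M0 _ i.2⟩ : E)) := by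
    apply LinearIndependent.of_comp E.val.toLinearMap
    exact hs
  simpa using hs'.fintype_card_le_finrank

theorem rank_bound {M0 M L V : Type*} [Field M0] [Field M] [Field L] [Field V]
    [Algebra M0 M] [Algebra M0 L] [Algebra M V] [Algebra L V] [Algebra M0 V]
    [IsScalarTower M0 M V] [IsScalarTower M0 L V] (p : ℕ) [hp : Fact p.Prime] [CharP M p]
    [FiniteDimensional M V] [Algebra.IsAlgebraic M0 L]
    (hcl : ∀ m : M, IsIntegral M0 m → m ∈ (algebraMap M0 M).range)
    (hL : ∀ m : ℕ, ∀ s : Finset L, p ^ m < s.card →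
      ∃ g : L → L, ∑ i ∈ s, g i ^ p ^ m * i = 0 ∧ ∃ i ∈ s, g i ≠ 0) :
    Module.rank M0 L ≤ (Module.finrank M V : ℕ) := by
  let S := separableClosure M V
  let T : IntermediateField M0 L :=
    (S.restrictScalars M0).comap (IsScalarTower.toAlgHom M0 L V)
  have hA : Module.rank M0 T ≤ (Module.finrank M S : ℕ) := by
    apply rank_le_of_deg_bound
    intro t
    have hsep : Algebra.IsSeparable M S := separableClosure.isSeparable M V
    exact sep_deg_bound hcl t S hsep t.2
  have : ExpChar M p := ExpChar.prime hp.out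
  have : CharP S p := charP_of_injective_algebraMap (algebraMap M S).injective p
  have : ExpChar S p := ExpChar.prime hp.out
  obtain ⟨m, hm⟩ := IsPurelyInseparable.finrank_eq_pow S V p
  have hpow : ∀ x : V, x ^ p ^ m ∈ S := by
    intro x
    have h1 := IsPurelyInseparable.elemExponent_def' S p x
    have h2 : IsPurelyInseparable.elemExponent S x ≤ m := by
      have h3 := IsPurelyInseparable.minpoly_natDegree_eq' S p x
      have h4 := minpoly.natDegree_le (A := S) x
      rw [h3, hm] at h4
      exact (Nat.pow_le_pow_iff_right hp.out.one_lt).1 h4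
    obtain ⟨k, hk⟩ := Nat.exists_eq_add_of_le h2
    obtain ⟨y, hy⟩ := h1
    rw [hk, pow_add, pow_mul, ← hy]
    exact pow_mem y.2 _
  have hB : Module.rank T L ≤ (Module.finrank S V : ℕ) := by
    rw [hm]
    apply rank_le
    intro s hs
    by_contra! hcon
    obtain ⟨g, hg, i, his, hgi⟩ := hL m s hcon
    rw [linearIndependent_iff'] at hs
    have hmem : ∀ x : L, x ^ p ^ m ∈ T := by
      intro x
      change algebraMap L V (x ^ p ^ m) ∈ S
      rw [map_pow]; exact hpow _
    have := hs Finset.univ (fun i => ⟨g i ^ p ^ m, hmem _⟩) (by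
      rw [← hg, ← Finset.sum_coe_sort s]
      rfl) ⟨i, his⟩ (Finset.mem_univ _)
    have h5 : g i ^ p ^ m = 0 := congrArg Subtype.val this
    exact hgi (pow_eq_zero_iff (pow_pos hp.out.pos m).ne' |>.1 h5)
  rw [← rank_mul_rank M0 T L, ← Module.finrank_mul_finrank M S V, Nat.cast_mul]
  exact mul_le_mul' hA hB

end RankBound

section Frob

theorem frob_rel {F L : Type*} [Field F] [Field L] [Algebra F L] (p : ℕ) [hp : Fact p.Prime]
    [CharP F p] [Algebra.IsAlgebraic F L] (π : F)
    (hF : ∀ m : ℕ, ∀ h : F, ∃ c : Fin (p ^ m) → F, h = ∑ j : Fin (p ^ m), π ^ (j : ℕ) * c j ^ p ^ m)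
    (m : ℕ) (s : Finset L) (hs : p ^ m < s.card) :
      ∃ g : L → L, ∑ i ∈ s, g i ^ p ^ m * i = 0 ∧ ∃ i ∈ s, g i ≠ 0 := by
  classical
  let E := IntermediateField.adjoin F (s : Set L)
  have : CharP L p := charP_of_injective_algebraMap (algebraMap F L).injective p
  have : FiniteDimensional F E := by
    apply IntermediateField.finiteDimensional_adjoin
    intro x _
    exact (Algebra.IsAlgebraic.isAlgebraic x).isIntegral
  let N := Module.finrank F E
  have hN : 0 < N := Module.finrank_pos
  let e : Module.Basis (Fin N) F E := Module.finBasis F E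
  have hsE : ∀ i ∈ s, i ∈ E := fun i hi => IntermediateField.subset_adjoin F _ hi
  let xs : s → E := fun i => ⟨i.1, hsE _ i.2⟩
  -- structure constants
  choose h hh using fun (i : s) (a b : Fin N) => hF m (e.repr (e a ^ p ^ m * xs i) b)
  let A : (s × Fin N → F) →ₗ[F] (Fin N × Fin (p ^ m) → F) :=
    LinearMap.pi fun bj => ∑ ia : s × Fin N, (h ia.1 ia.2 bj.1 bj.2) • LinearMap.proj ia
  have hker : LinearMap.ker A ≠ ⊥ := by
    apply LinearMap.ker_ne_bot_of_finrank_lt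
    simp only [Module.finrank_fintype_fun_eq_card, Fintype.card_prod, Fintype.card_fin,
      Fintype.card_coe]
    rw [mul_comm]; exact Nat.mul_lt_mul_of_pos_right hs hN
  obtain ⟨f, hf, hf0⟩ := (Submodule.ne_bot_iff _).1 hker
  have hf' : ∀ b j, ∑ ia : s × Fin N, h ia.1 ia.2 b j * f ia = 0 := by
    intro b j
    have := congrFun (LinearMap.mem_ker.1 hf) (b, j)
    simpa [A, LinearMap.sum_apply] using this
  let gE : s → E := fun i => ∑ a, f (i, a) • e a
  have : CharP E p := charP_of_injective_algebraMap (algebraMap F E).injective p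
  have hsum : ∑ i : s, gE i ^ p ^ m * xs i = 0 := by
    apply e.repr.injective
    ext b
    rw [map_zero, Finsupp.zero_apply]
    have h1 : ∀ i : s, gE i ^ p ^ m * xs i = ∑ a, f (i, a) ^ p ^ m • (e a ^ p ^ m * xs i) := by
      intro i
      simp only [gE]
      rw [sum_pow_char_pow, Finset.sum_mul]
      refine Finset.sum_congr rfl fun a _ => ?_
      rw [smul_pow, smul_mul_assoc]
    simp only [h1, map_sum, map_smul, Finsupp.coe_finsetSum, Finset.sum_apply, Finsupp.smul_apply,
      smul_eq_mul]
    calc ∑ i : s, ∑ a, f (i, a) ^ p ^ m * e.repr (e a ^ p ^ m * xs i) b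
        = ∑ i : s, ∑ a, ∑ j : Fin (p ^ m), π ^ (j : ℕ) * (h i a b j * f (i, a)) ^ p ^ m := by
          refine Finset.sum_congr rfl fun i _ => Finset.sum_congr rfl fun a _ => ?_
          rw [hh i a b, Finset.mul_sum]
          refine Finset.sum_congr rfl fun j _ => ?_
          rw [mul_pow]; ring
      _ = ∑ ia : s × Fin N, ∑ j : Fin (p ^ m), π ^ (j : ℕ) * (h ia.1 ia.2 b j * f ia) ^ p ^ m := by
          rw [Fintype.sum_prod_type]
      _ = ∑ j : Fin (p ^ m), π ^ (j : ℕ) * (∑ ia : s × Fin N, h ia.1 ia.2 b j * f ia) ^ p ^ m := by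
          rw [Finset.sum_comm]
          refine Finset.sum_congr rfl fun j _ => ?_
          rw [sum_pow_char_pow, Finset.mul_sum]
      _ = 0 := by
          apply Finset.sum_eq_zero
          intro j _
          rw [hf', zero_pow (pow_pos hp.out.pos m).ne', mul_zero]
  refine ⟨fun x => if hx : x ∈ s then (gE ⟨x, hx⟩ : L) else 0, ?_, ?_⟩
  · rw [← Finset.sum_coe_sort s]
    have h2 := congrArg (algebraMap E L) hsum
    rw [map_sum, map_zero] at h2
    rw [← h2]
    refine Finset.sum_congr rfl fun i _ => ?_
    simp [xs]
  · by_contra! hcon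
    apply hf0
    ext ⟨i, a⟩
    have h3 := hcon i i.2
    simp only [Finset.coe_mem, dif_pos] at h3
    have h4 : gE i = 0 := by exact_mod_cast h3
    exact Fintype.linearIndependent_iff.1 e.linearIndependent (fun a => f (i, a)) h4 a

theorem ore_rel {F V : Type*} [Field F] [Field V] [Algebra F V] (p : ℕ) (y : V)
    (W : Submodule F V) [FiniteDimensional F W] (n : ℕ) (hn : Module.finrank F W ≤ n)
    (hW : ∀ k ≤ n, y ^ p ^ k ∈ W) :
    ∃ c : ℕ → F, (∃ k ≤ n, c k ≠ 0) ∧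
      ∑ k ∈ Finset.range (n + 1), algebraMap F V (c k) * y ^ p ^ k = 0 := by
  let w : Fin (n + 1) → W := fun k => ⟨y ^ p ^ (k : ℕ), hW k (by omega)⟩
  have hdep : ¬ LinearIndependent F w := by
    intro h
    have := h.fintype_card_le_finrank
    simp at this; omega
  rw [Fintype.not_linearIndependent_iff] at hdep
  obtain ⟨c, hc, k, hk⟩ := hdep
  refine ⟨fun k => if h : k < n + 1 then c ⟨k, h⟩ else 0, ⟨k, by omega, by dsimp only; rw [dif_pos k.2]; exact hk⟩, ?_⟩
  rw [Finset.sum_range]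
  have h2 := congrArg W.subtype hc
  rw [map_sum, map_zero] at h2
  rw [← h2]
  refine Finset.sum_congr rfl fun i _ => ?_
  dsimp only
  rw [dif_pos i.2]
  simp [w, Algebra.smul_def]

theorem algebraic_of_ore {F V : Type*} [Field F] [Field V] [Algebra F V] (p : ℕ)
    [hp : Fact p.Prime] (y : V) (n : ℕ) (c : ℕ → F) (hc : ∃ k ≤ n, c k ≠ 0)
    (h : ∑ k ∈ Finset.range (n + 1), algebraMap F V (c k) * y ^ p ^ k = 0) : IsAlgebraic F y := by
  obtain ⟨k, hk, hck⟩ := hc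
  refine ⟨∑ k ∈ Finset.range (n + 1), Polynomial.monomial (p ^ k) (c k), ?_, ?_⟩
  · intro h0
    have h1 := congrArg (fun f => Polynomial.coeff f (p ^ k)) h0
    simp only [Polynomial.finsetSum_coeff, Polynomial.coeff_monomial, Polynomial.coeff_zero] at h1
    rw [Finset.sum_eq_single k] at h1
    · simp at h1; exact hck h1
    · intro b _ hb
      rw [if_neg]
      intro h2
      exact hb (Nat.pow_right_injective hp.out.two_le h2)
    · intro h3; simp at h3; omega
  · rw [map_sum, ← h]
    refine Finset.sum_congr rfl fun i _ => ?_
    rw [Polynomial.aeval_monomial]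

theorem algebraic_of_frob_span {F V ι : Type*} [Field F] [Field V] [Algebra F V] (p : ℕ)
    [hp : Fact p.Prime] [CharP V p] [Fintype ι] (g : ι → V)
    (hg : ∀ i, ∃ c : ι → F, g i = ∑ j, algebraMap F V (c j) * g j ^ p) (i : ι) :
    IsAlgebraic F (g i) := by
  choose c hc using hg
  let W : ℕ → Submodule F V := fun k => Submodule.span F (Set.range fun i => g i ^ p ^ k)
  have hmem : ∀ k i, g i ^ p ^ k ∈ W k := fun k i => Submodule.subset_span ⟨i, rfl⟩
  have hmono : Monotone W := by
    apply monotone_nat_of_le_succ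
    intro k
    apply Submodule.span_le.2
    rintro _ ⟨i, rfl⟩
    dsimp only
    rw [hc i, sum_pow_char_pow]
    apply Submodule.sum_mem
    intro j _
    rw [mul_pow, ← map_pow, ← Algebra.smul_def, ← pow_mul, ← pow_succ']
    exact Submodule.smul_mem _ _ (hmem _ _)
  let n := Fintype.card ι
  have : FiniteDimensional F (W n) := FiniteDimensional.span_of_finite F (Set.finite_range _)
  have hfr : Module.finrank F (W n) ≤ n := finrank_range_le_card _
  obtain ⟨d, hd, h⟩ := ore_rel p (g i) (W n) n hfr (fun k hk => hmono hk (hmem k i))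
  exact algebraic_of_ore p (g i) n d hd h

end Frob

section Topo

set_option linter.unusedSectionVars false

open Filter Topology

theorem valued_nonarch (V : Type*) [Field V] [Valued V ZM0] : NonarchimedeanRing V where
  is_nonarchimedean := by
    intro U hU
    obtain ⟨γ, hγ⟩ := Valued.mem_nhds_zero.1 hU
    refine ⟨⟨(Valued.v (R := V)).restrict.ltAddSubgroup γ, ?_⟩, ?_⟩
    · apply AddSubgroup.isOpen_of_mem_nhds (g := 0)
      exact Valued.mem_nhds_zero.2 ⟨γ, fun x hx => hx⟩
    · intro x hx
      exact hγ hx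

theorem ball_mem_nhds {V : Type*} [Field V] [Valued V ZM0] (x r : V) (hr : r ≠ 0) :
    {y : V | Valued.v (y - x) ≤ Valued.v r} ∈ 𝓝 x := by
  rw [Valued.mem_nhds]
  have h' : (Valued.v (R := V)).restrict r ≠ 0 := by simp [hr]
  refine ⟨Units.mk0 _ h', fun y hy => ?_⟩
  exact ((Valued.v (R := V)).restrict_lt_iff.mp hy).le

variable {V : Type*} [Field V] [Valued V ZM0]

theorem eq_zero_of_small {π x : V} (hπ : Valued.v π < 1)
    (h : ∀ n : ℕ, Valued.v x ≤ Valued.v (π ^ n)) : x = 0 := by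
  by_contra hx
  have hx' : Valued.v x ≠ 0 := (Valuation.ne_zero_iff _).2 hx
  obtain ⟨n, hn⟩ := exists_pow_lt₀ hπ (Units.mk0 _ hx')
  have := h n
  rw [map_pow] at this
  exact absurd hn (not_lt.2 this)

theorem tendsto_bounded {π : V} (hπ : Valued.v π < 1) (b : ℕ → V) (hb : ∀ n, Valued.v (b n) ≤ 1) :
    Tendsto (fun n => b n * π ^ n) atTop (𝓝 0) := by
  have h := Valued.tendsto_zero_pow_of_v_lt_one hπ
  rw [(Valued.hasBasis_nhds_zero _ _).tendsto_right_iff] at h ⊢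
  intro γ _
  filter_upwards [h γ trivial] with n hn
  refine lt_of_le_of_lt ?_ hn
  rw [Valuation.restrict_le_iff, map_mul]
  exact mul_le_of_le_one_left' (hb n)

variable [CompleteSpace V]

theorem summable_bounded {π : V} (hπ : Valued.v π < 1) (b : ℕ → V)
    (hb : ∀ n, Valued.v (b n) ≤ 1) : Summable (fun n => b n * π ^ n) := by
  have := valued_nonarch V
  apply NonarchimedeanAddGroup.summable_of_tendsto_cofinite_zero
  rw [Nat.cofinite_eq_atTop]
  exact tendsto_bounded hπ b hb

/-- Sum of the series. -/
noncomputable def EE (π : V) (b : ℕ → V) : V := ∑' n, b n * π ^ n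

theorem EE_le {π : V} (hπ : Valued.v π < 1) (b : ℕ → V)
    (hb : ∀ n, Valued.v (b n) ≤ 1) : Valued.v (EE π b) ≤ 1 := by
  have hcl := Valued.isClosed_integer (R := V) (Γ₀ := ZM0)
  have h1 := (summable_bounded hπ b hb).hasSum
  refine hcl.mem_of_tendsto h1 (Eventually.of_forall fun s => ?_)
  apply sum_mem
  intro i _
  change Valued.v (b i * π ^ i) ≤ 1
  rw [map_mul, map_pow]
  exact mul_le_one' (hb i) (pow_le_one' hπ.le _)

theorem EE_succ {π : V} (hπ : Valued.v π < 1) (b : ℕ → V)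
    (hb : ∀ n, Valued.v (b n) ≤ 1) : EE π b = b 0 + π * EE π (fun n => b (n + 1)) := by
  unfold EE
  rw [(summable_bounded hπ b hb).tsum_eq_zero_add, ← tsum_mul_left]
  simp only [pow_zero, mul_one]
  congr 1
  apply tsum_congr
  intro n
  ring

theorem EE_unique {π : V} (hπ : Valued.v π < 1) (b z : ℕ → V)
    (hb : ∀ n, Valued.v (b n) ≤ 1) (hz : ∀ n, Valued.v (z n) ≤ 1)
    (h : ∀ n, z n = b n + π * z (n + 1)) : z 0 = EE π b := by
  rw [← sub_eq_zero]
  apply eq_zero_of_small hπ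
  intro n
  have key : ∀ n m, z m - EE π (fun k => b (m + k)) =
      π ^ n * (z (m + n) - EE π (fun k => b (m + n + k))) := by
    intro n
    induction n with
    | zero => intro m; simp
    | succ n ih =>
      intro m
      rw [ih m, h (m + n), EE_succ hπ (fun k => b (m + n + k)) (fun k => hb _)]
      have : (fun k => b (m + n + (k + 1))) = fun k => b (m + (n + 1) + k) := by
        funext k; congr 1; ring
      rw [this]
      simp only [add_zero, add_assoc]
      ring
  have h0 := key n 0
  simp only [zero_add] at h0
  rw [h0, map_mul]
  refine mul_le_of_le_one_right' ?_
  exact (Valued.v.map_sub _ _).trans (max_le (hz _) (EE_le hπ _ fun k => hb _))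

theorem EE_smul {π : V} (c : V) (b : ℕ → V) :
    EE π (fun n => c * b n) = c * EE π b := by
  unfold EE
  rw [← tsum_mul_left]
  exact tsum_congr fun n => by ring

theorem EE_sum {π : V} (hπ : Valued.v π < 1) {ι : Type*} (s : Finset ι) (b : ι → ℕ → V)
    (hb : ∀ i ∈ s, ∀ n, Valued.v (b i n) ≤ 1) :
    EE π (fun n => ∑ i ∈ s, b i n) = ∑ i ∈ s, EE π (b i) := by
  unfold EE
  rw [← Summable.tsum_finsetSum (fun i hi => summable_bounded hπ _ (hb i hi))]
  exact tsum_congr fun n => by rw [Finset.sum_mul]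

theorem v_natCast_le (n : ℕ) : Valued.v (n : V) ≤ 1 := by
  induction n with
  | zero => simp
  | succ n ih =>
    push_cast
    exact (Valued.v.map_add _ _).trans (max_le ih (by simp))

theorem v_zmod_le (p : ℕ) [Fact p.Prime] [Algebra (ZMod p) V] (a : ZMod p) :
    Valued.v (algebraMap (ZMod p) V a) ≤ 1 := by
  rw [← ZMod.natCast_zmod_val a, map_natCast]
  exact v_natCast_le _

theorem phi_add_aux (p : ℕ) [Fact p.Prime] [Algebra (ZMod p) V] {π : V}
    (hπ : Valued.v π < 1) (f g : PowerSeries (ZMod p)) :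
    EE π (fun n => algebraMap (ZMod p) V (PowerSeries.coeff n (f + g))) =
    EE π (fun n => algebraMap (ZMod p) V (PowerSeries.coeff n f)) +
    EE π (fun n => algebraMap (ZMod p) V (PowerSeries.coeff n g)) := by
  have hf := summable_bounded hπ (fun n => algebraMap (ZMod p) V (PowerSeries.coeff n f))
      fun n => v_zmod_le p _
  have hg := summable_bounded hπ (fun n => algebraMap (ZMod p) V (PowerSeries.coeff n g))
      fun n => v_zmod_le p _
  unfold EE
  rw [← hf.tsum_add hg]
  refine tsum_congr fun n => ?_
  dsimp only
  rw [map_add, map_add, add_mul]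

theorem phi_mul_aux (p : ℕ) [Fact p.Prime] [Algebra (ZMod p) V] {π : V}
    (hπ : Valued.v π < 1) (f g : PowerSeries (ZMod p)) :
    EE π (fun n => algebraMap (ZMod p) V (PowerSeries.coeff n (f * g))) =
    EE π (fun n => algebraMap (ZMod p) V (PowerSeries.coeff n f)) *
    EE π (fun n => algebraMap (ZMod p) V (PowerSeries.coeff n g)) := by
  have := valued_nonarch V
  have hf := summable_bounded hπ (fun n => algebraMap (ZMod p) V (PowerSeries.coeff n f))
      fun n => v_zmod_le p _
  have hg := summable_bounded hπ (fun n => algebraMap (ZMod p) V (PowerSeries.coeff n g))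
      fun n => v_zmod_le p _
  have hfg := hf.mul_of_nonarchimedean hg
  unfold EE
  rw [hf.tsum_mul_tsum_eq_tsum_sum_antidiagonal hg hfg]
  apply tsum_congr
  intro n
  dsimp only
  rw [PowerSeries.coeff_mul, map_sum, Finset.sum_mul]
  refine Finset.sum_congr rfl fun x hx => ?_
  rw [← Finset.HasAntidiagonal.mem_antidiagonal.1 hx, map_mul, pow_add]
  ring

theorem phi_one_aux (p : ℕ) [Fact p.Prime] [Algebra (ZMod p) V] {π : V} :
    EE π (fun n => algebraMap (ZMod p) V (PowerSeries.coeff n (1 : PowerSeries (ZMod p)))) = 1 := by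
  unfold EE
  rw [tsum_eq_single 0]
  · simp
  · intro n hn; simp [PowerSeries.coeff_one, hn]

/-- The evaluation of power series at `π`. -/
noncomputable def phi (p : ℕ) [Fact p.Prime] [Algebra (ZMod p) V] (π : V)
    (hπ : Valued.v π < 1) : PowerSeries (ZMod p) →+* V where
  toFun f := EE π (fun n => algebraMap (ZMod p) V (PowerSeries.coeff n f))
  map_zero' := by simp [EE]
  map_one' := phi_one_aux p
  map_add' f g := phi_add_aux p hπ f g
  map_mul' f g := phi_mul_aux p hπ f g

theorem phi_apply (p : ℕ) [Fact p.Prime] [Algebra (ZMod p) V] (π : V)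
    (hπ : Valued.v π < 1) (f : PowerSeries (ZMod p)) :
    phi p π hπ f = EE π (fun n => algebraMap (ZMod p) V (PowerSeries.coeff n f)) := rfl

theorem phi_X (p : ℕ) [Fact p.Prime] [Algebra (ZMod p) V] (π : V)
    (hπ : Valued.v π < 1) : phi p π hπ PowerSeries.X = π := by
  rw [phi_apply]
  unfold EE
  rw [tsum_eq_single 1]
  · simp
  · intro n hn; simp [PowerSeries.coeff_X, hn]

theorem phi_le (p : ℕ) [Fact p.Prime] [Algebra (ZMod p) V] (π : V)
    (hπ : Valued.v π < 1) (f : PowerSeries (ZMod p)) : Valued.v (phi p π hπ f) ≤ 1 :=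
  EE_le hπ _ fun _ => v_zmod_le p _

theorem phi_C (p : ℕ) [Fact p.Prime] [Algebra (ZMod p) V] (π : V)
    (hπ : Valued.v π < 1) (a : ZMod p) : phi p π hπ (PowerSeries.C a) = algebraMap _ V a := by
  rw [phi_apply]
  unfold EE
  rw [tsum_eq_single 0]
  · simp
  · intro n hn; simp [PowerSeries.coeff_C, hn]

theorem phi_coe (p : ℕ) [Fact p.Prime] [Algebra (ZMod p) V] (π : V)
    (hπ : Valued.v π < 1) (f : Polynomial (ZMod p)) :
    phi p π hπ (f : PowerSeries (ZMod p)) = Polynomial.aeval π f := by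
  induction f using Polynomial.induction_on' with
  | add f g hf hg => simp [hf, hg]
  | monomial n a =>
    rw [← Polynomial.C_mul_X_pow_eq_monomial]
    simp [phi_X, phi_C]

theorem v_zmod_eq (p : ℕ) [Fact p.Prime] [Algebra (ZMod p) V] (a : ZMod p) (ha : a ≠ 0) :
    Valued.v (algebraMap (ZMod p) V a) = 1 := by
  apply le_antisymm (v_zmod_le p a)
  have h1 : Valued.v (algebraMap (ZMod p) V a) * Valued.v (algebraMap (ZMod p) V a⁻¹) = 1 := by
    rw [← map_mul, ← map_mul, mul_inv_cancel₀ ha, map_one, map_one]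
  rw [← h1]
  exact mul_le_of_le_one_right' (v_zmod_le p _)

/-- Splitting off the constant coefficient. -/
theorem phi_split (p : ℕ) [Fact p.Prime] [Algebra (ZMod p) V] (π : V)
    (hπ : Valued.v π < 1) (f : PowerSeries (ZMod p)) : ∃ g : PowerSeries (ZMod p),
      (∀ n, PowerSeries.coeff n g = PowerSeries.coeff (n + 1) f) ∧
      phi p π hπ f = algebraMap _ V (PowerSeries.coeff 0 f) + π * phi p π hπ g := by
  refine ⟨PowerSeries.mk fun n => PowerSeries.coeff (n + 1) f, fun n => by simp, ?_⟩
  rw [phi_apply, EE_succ hπ _ fun _ => v_zmod_le p _, phi_apply]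
  simp

theorem phi_injective (p : ℕ) [Fact p.Prime] [Algebra (ZMod p) V] (π : V) (hπ0 : π ≠ 0)
    (hπ : Valued.v π < 1) : Function.Injective (phi p π hπ) := by
  rw [injective_iff_map_eq_zero]
  have key : ∀ n, ∀ f : PowerSeries (ZMod p), phi p π hπ f = 0 → PowerSeries.coeff n f = 0 := by
    intro n
    induction n with
    | zero =>
      intro f hf
      by_contra h
      obtain ⟨g, -, hg⟩ := phi_split p π hπ f
      rw [hf] at hg
      have h2 := v_zmod_eq (V := V) p _ h
      have h3 : algebraMap (ZMod p) V (PowerSeries.coeff 0 f) = - (π * phi p π hπ g) := by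
        rw [eq_neg_iff_add_eq_zero, ← hg]
      rw [h3, Valuation.map_neg, map_mul] at h2
      have : Valued.v π * Valued.v (phi p π hπ g) < 1 :=
        mul_lt_one_of_lt_of_le hπ (phi_le p π hπ g)
      exact this.ne h2
    | succ n ih =>
      intro f hf
      obtain ⟨g, hg1, hg⟩ := phi_split p π hπ f
      rw [← hg1]
      apply ih
      have h0 : PowerSeries.coeff 0 f = 0 := by
        by_contra h
        rw [hf] at hg
        have h2 := v_zmod_eq (V := V) p _ h
        have h3 : algebraMap (ZMod p) V (PowerSeries.coeff 0 f) = - (π * phi p π hπ g) := by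
          rw [eq_neg_iff_add_eq_zero, ← hg]
        rw [h3, Valuation.map_neg, map_mul] at h2
        have : Valued.v π * Valued.v (phi p π hπ g) < 1 :=
          mul_lt_one_of_lt_of_le hπ (phi_le p π hπ g)
        exact this.ne h2
      rw [hf, h0, map_zero, zero_add] at hg
      exact (mul_eq_zero.1 hg.symm).resolve_left hπ0
  intro f hf
  ext n
  simpa using key n f hf

end Topo

section Digits

set_option linter.unusedSectionVars false

theorem gamma_submodule {V : Type*} [Field V] [Valued V ZM0] (p : ℕ) [hp : Fact p.Prime]
    [CharP V p] [Algebra (ZMod p) V] (π : V) (Γ : Set V) (hΓ : IsCompleteSetOfReps π Γ)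
    (hadd : ∀ μ ∈ Γ, ∀ ν ∈ Γ, μ + ν ∈ Γ) : ∃ G : Submodule (ZMod p) V, (G : Set V) = Γ := by
  have hmul : ∀ n : ℕ, ∀ γ ∈ Γ, (n + 1) • γ ∈ Γ := by
    intro n γ hγ
    induction n with
    | zero => simpa using hγ
    | succ n ih => rw [succ_nsmul]; exact hadd _ ih _ hγ
  have hz : (0 : V) ∈ Γ := by
    obtain ⟨γ, ⟨hγ, -⟩, -⟩ := hΓ.2 0 (by simp)
    have h1 := hmul (p - 1) γ hγ
    rw [Nat.sub_add_cancel hp.out.one_le] at h1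
    rwa [nsmul_eq_mul, CharP.cast_eq_zero, zero_mul] at h1
  suffices hs : ∀ (c : ZMod p) (x : V), x ∈ Γ → c • x ∈ Γ by
    exact ⟨{
      carrier := Γ
      add_mem' := fun {a b} ha hb => hadd a ha b hb
      zero_mem' := hz
      smul_mem' := hs }, rfl⟩
  intro c x hx
  rw [← ZMod.natCast_zmod_val c, Algebra.smul_def, map_natCast, ← nsmul_eq_mul]
  rcases c.val with _ | n
  · simpa using hz
  · exact hmul n x hx

variable {V : Type*} [Field V] [Valued V ZM0] [CompleteSpace V] (p : ℕ) [hp : Fact p.Prime]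
    [Algebra (ZMod p) V] {π : V} (hπ0 : π ≠ 0) (hπ : Valued.v π < 1)
    (G : Submodule (ZMod p) V) (hG : IsCompleteSetOfReps π (G : Set V))

include hG

theorem G_small (γ : V) (hγ : γ ∈ G) (h : Valued.v γ ≤ Valued.v π) : γ = 0 := by
  obtain ⟨δ, -, hδ⟩ := hG.2 0 (by simp)
  rw [hδ γ ⟨hγ, by simpa using h⟩, hδ 0 ⟨G.zero_mem, by simp⟩]

include hπ0

theorem G_indep {ι : Type*} [Fintype ι] (γ u : ι → V) (hγ : ∀ i, γ i ∈ G)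
    (hli : LinearIndependent (ZMod p) γ) (hu : ∀ i, Valued.v (u i - γ i) ≤ Valued.v π)
    (f : ι → PowerSeries (ZMod p)) (h : ∑ i, phi p π hπ (f i) * u i = 0) (i : ι) : f i = 0 := by
  have hu1 : ∀ i, Valued.v (u i) ≤ 1 := by
    intro i
    have : u i = (u i - γ i) + γ i := by ring
    rw [this]
    exact (Valued.v.map_add _ _).trans (max_le ((hu i).trans hπ.le) (hG.1 _ (hγ i)))
  have hle : ∀ w : ι → V, (∀ i, Valued.v (w i) ≤ 1) → Valued.v (π * ∑ i, w i) ≤ Valued.v π := by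
    intro w hw
    rw [map_mul]
    exact mul_le_of_le_one_right' (Valued.v.map_sum_le fun i _ => hw i)
  have zero : ∀ f : ι → PowerSeries (ZMod p), ∑ i, phi p π hπ (f i) * u i = 0 →
      ∀ i, PowerSeries.coeff 0 (f i) = 0 := by
    intro f h
    choose g hg1 hg using fun i => phi_split p π hπ (f i)
    have h1 : ∑ i, PowerSeries.coeff 0 (f i) • γ i =
        -(π * ∑ i, phi p π hπ (g i) * u i) -
          ∑ i, algebraMap _ V (PowerSeries.coeff 0 (f i)) * (u i - γ i) := by
      have h2 : ∑ i, algebraMap _ V (PowerSeries.coeff 0 (f i)) * (u i - γ i) =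
          ∑ i, algebraMap _ V (PowerSeries.coeff 0 (f i)) * u i -
          ∑ i, PowerSeries.coeff 0 (f i) • γ i := by
        rw [← Finset.sum_sub_distrib]
        exact Finset.sum_congr rfl fun i _ => by rw [Algebra.smul_def]; ring
      have h3 : ∑ i, phi p π hπ (f i) * u i =
          ∑ i, algebraMap _ V (PowerSeries.coeff 0 (f i)) * u i +
            π * ∑ i, phi p π hπ (g i) * u i := by
        rw [Finset.mul_sum, ← Finset.sum_add_distrib]
        exact Finset.sum_congr rfl fun i _ => by rw [hg i]; ring
      rw [h2]
      rw [h] at h3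
      linear_combination -h3
    have h4 : ∑ i, PowerSeries.coeff 0 (f i) • γ i = 0 := by
      apply G_small p G hG
      · exact G.sum_mem fun i _ => G.smul_mem _ (hγ i)
      · rw [h1]
        refine (Valued.v.map_sub _ _).trans (max_le ?_ ?_)
        · rw [Valuation.map_neg]
          apply hle
          intro i
          rw [map_mul]
          exact mul_le_one' (phi_le p π hπ _) (hu1 i)
        · refine Valued.v.map_sum_le fun i _ => ?_
          rw [map_mul]
          exact mul_le_of_le_one_of_le (v_zmod_le p _) (hu i)
    exact Fintype.linearIndependent_iff.1 hli _ h4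
  have key : ∀ n, ∀ f : ι → PowerSeries (ZMod p), ∑ i, phi p π hπ (f i) * u i = 0 →
      ∀ i, PowerSeries.coeff n (f i) = 0 := by
    intro n
    induction n with
    | zero => exact zero
    | succ n ih =>
      intro f h i
      choose g hg1 hg using fun i => phi_split p π hπ (f i)
      rw [← hg1]
      apply ih
      have h0 := zero f h
      have : π * ∑ i, phi p π hπ (g i) * u i = 0 := by
        rw [← h, Finset.mul_sum]
        exact Finset.sum_congr rfl fun i _ => by rw [hg i, h0 i, map_zero]; ring
      exact (mul_eq_zero.1 this).resolve_left hπ0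
  ext n
  simpa using key n f h i

include hπ

theorem exists_digits (x : V) (hx : Valued.v x ≤ 1) :
    ∃ a : ℕ → V, (∀ n, a n ∈ G) ∧ x = EE π a := by
  have hd : ∀ x : {x : V // Valued.v x ≤ 1}, ∃ d ∈ G, ∃ y : {x : V // Valued.v x ≤ 1},
      (x : V) = d + π * y := by
    rintro ⟨x, hx⟩
    obtain ⟨d, ⟨hd, hd2⟩, -⟩ := hG.2 x hx
    refine ⟨d, hd, ⟨(x - d) / π, ?_⟩, ?_⟩
    · rw [map_div₀]
      exact div_le_one_of_le₀ hd2 zero_le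
    · field_simp
      simp
  choose d hdG y hy using hd
  let z : ℕ → {x : V // Valued.v x ≤ 1} := fun n => y^[n] ⟨x, hx⟩
  refine ⟨fun n => d (z n), fun n => hdG _, ?_⟩
  have := EE_unique hπ (fun n => d (z n)) (fun n => (z n : V)) (fun n => hG.1 _ (hdG _))
    (fun n => (z n).2) ?_
  · rw [← this]; rfl
  · intro n
    rw [hy (z n)]
    simp only [z, Function.iterate_succ_apply']

end Digits

section Frac

theorem mem_frac {R V : Type*} [CommRing R] [Field V] (ψ : R →+* V) (x : V) :
    x ∈ Subfield.closure (ψ.range : Set V) ↔ ∃ f g, ψ f / ψ g = x := by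
  rw [Subfield.mem_closure_iff, Subring.closure_eq]
  constructor
  · rintro ⟨_, ⟨f, rfl⟩, _, ⟨g, rfl⟩, h⟩
    exact ⟨f, g, h⟩
  · rintro ⟨f, g, h⟩
    exact ⟨_, ⟨f, rfl⟩, _, ⟨g, rfl⟩, h⟩

theorem mem_frac' {R V : Type*} [CommRing R] [Field V] (ψ : R →+* V) (x : V)
    (hx : x ∈ Subfield.closure (ψ.range : Set V)) : ∃ f g, ψ g ≠ 0 ∧ ψ g * x = ψ f := by
  obtain ⟨f, g, rfl⟩ := (mem_frac ψ x).1 hx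
  by_cases hg : ψ g = 0
  · exact ⟨0, 1, by simp, by simp [hg]⟩
  · exact ⟨f, g, hg, by field_simp⟩

theorem common_denom {R V ι : Type*} [CommRing R] [Field V] [Fintype ι] (ψ : R →+* V)
    (c : ι → V) (hc : ∀ i, c i ∈ Subfield.closure (ψ.range : Set V)) :
    ∃ (d : R) (f : ι → R), ψ d ≠ 0 ∧ ∀ i, ψ d * c i = ψ (f i) := by
  classical
  choose f g hg hf using fun i => mem_frac' ψ (c i) (hc i)
  refine ⟨∏ i, g i, fun i => (∏ j ∈ Finset.univ.erase i, g j) * f i, ?_, ?_⟩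
  · rw [map_prod]; exact Finset.prod_ne_zero_iff.2 fun i _ => hg i
  · intro i
    rw [← Finset.mul_prod_erase Finset.univ g (Finset.mem_univ i), map_mul, map_mul, ← hf i]
    ring

end Frac

section AlgRed

set_option linter.unusedSectionVars false

theorem isAlg_mono {R₁ R₂ V : Type*} [CommRing R₁] [CommRing R₂] [Field V] [Algebra R₁ V]
    [Algebra R₂ V] (hinj : Function.Injective (algebraMap R₁ V))
    (h : ∀ r : R₁, ∃ s : R₂, algebraMap R₂ V s = algebraMap R₁ V r) {x : V}
    (hx : IsAlgebraic R₁ x) : IsAlgebraic R₂ x := by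
  obtain ⟨P, hP, hPx⟩ := hx
  have hl : P.map (algebraMap R₁ V) ∈ Polynomial.lifts (algebraMap R₂ V) := by
    rw [Polynomial.lifts_iff_coeff_lifts]
    intro n
    rw [Polynomial.coeff_map]
    exact h _
  obtain ⟨Q, hQ⟩ := (Polynomial.mem_lifts _).1 hl
  refine ⟨Q, ?_, ?_⟩
  · rintro rfl
    rw [Polynomial.map_zero] at hQ
    exact hP ((Polynomial.map_injective _ hinj) (by rw [← hQ, Polynomial.map_zero]))
  · rw [Polynomial.aeval_def, ← Polynomial.eval_map, hQ, Polynomial.eval_map,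
      ← Polynomial.aeval_def, hPx]

/-- The subfield generated by `π`. -/
noncomputable def FF {V : Type*} [Field V] (p : ℕ) [Algebra (ZMod p) V] (π : V) : Subfield V :=
  Subfield.closure (((Polynomial.aeval π : Polynomial (ZMod p) →ₐ[ZMod p] V) :
    Polynomial (ZMod p) →+* V).range : Set V)

theorem aeval_mem_FF {V : Type*} [Field V] (p : ℕ) [Algebra (ZMod p) V] (π : V)
    (f : Polynomial (ZMod p)) : Polynomial.aeval π f ∈ FF p π :=
  Subfield.subset_closure ⟨f, rfl⟩

theorem self_mem_FF {V : Type*} [Field V] (p : ℕ) [Algebra (ZMod p) V] (π : V) : π ∈ FF p π := by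
  simpa using aeval_mem_FF p π Polynomial.X

theorem alg_adjoin_of_subfield {V : Type*} [Field V] (p : ℕ) [Fact p.Prime] [Algebra (ZMod p) V]
    (K : Subfield V) {x : V} (hx : IsAlgebraic K x) :
    IsAlgebraic (Algebra.adjoin (ZMod p) (K : Set V)) x :=
  isAlg_mono (R₁ := K) Subtype.val_injective
    (fun r => ⟨⟨r.1, Algebra.subset_adjoin r.2⟩, rfl⟩) hx

theorem zmod_mem {V : Type*} [Field V] (p : ℕ) [Fact p.Prime] [Algebra (ZMod p) V]
    (K : Subfield V) (a : ZMod p) : algebraMap (ZMod p) V a ∈ K := by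
  rw [← ZMod.natCast_zmod_val a, map_natCast]
  exact natCast_mem K _

theorem adjoin_le_subfield {V : Type*} [Field V] (p : ℕ) [Fact p.Prime] [Algebra (ZMod p) V]
    (K : Subfield V) (s : Set V) (hs : s ⊆ K) (x : V) (hx : x ∈ Algebra.adjoin (ZMod p) s) :
    x ∈ K := by
  induction hx using Algebra.adjoin_induction with
  | mem x hx => exact hs hx
  | algebraMap r => exact zmod_mem p K r
  | add x y _ _ h1 h2 => exact add_mem h1 h2
  | mul x y _ _ h1 h2 => exact mul_mem h1 h2

theorem alg_subfield_of_adjoin {V : Type*} [Field V] (p : ℕ) [Fact p.Prime] [Algebra (ZMod p) V]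
    (K : Subfield V) (s : Set V) (hs : s ⊆ K) {x : V}
    (hx : IsAlgebraic (Algebra.adjoin (ZMod p) s) x) : IsAlgebraic K x :=
  isAlg_mono (R₁ := Algebra.adjoin (ZMod p) s) Subtype.val_injective
    (fun r => ⟨⟨r.1, adjoin_le_subfield p K s hs r.1 r.2⟩, rfl⟩) hx

theorem alg_trans {V : Type*} [Field V] (p : ℕ) [Fact p.Prime] [Algebra (ZMod p) V]
    (A B : Subfield V) (h : ∀ b ∈ B, IsAlgebraic A b) {x : V} (hx : IsAlgebraic B x) :
    IsAlgebraic A x := by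
  apply alg_subfield_of_adjoin p A A subset_rfl
  exact IsAlgebraic.adjoin_of_forall_isAlgebraic
    (fun y hy => alg_adjoin_of_subfield p A (h y hy.1)) (alg_adjoin_of_subfield p B hx)

theorem closure_alg_adjoin {V : Type*} [Field V] (p : ℕ) [Fact p.Prime] [Algebra (ZMod p) V]
    (s : Set V) (y : V) (hy : y ∈ Subfield.closure s) :
    IsAlgebraic (Algebra.adjoin (ZMod p) s) y := by
  have hsub : Subring.closure s ≤ (Algebra.adjoin (ZMod p) s).toSubring :=
    Subring.closure_le.2 fun x hx => Algebra.subset_adjoin hx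
  rw [Subfield.mem_closure_iff] at hy
  obtain ⟨a, ha, b, hb, rfl⟩ := hy
  have h1 : IsAlgebraic (Algebra.adjoin (ZMod p) s) a :=
    isAlgebraic_algebraMap (⟨a, hsub ha⟩ : Algebra.adjoin (ZMod p) s)
  have h2 : IsAlgebraic (Algebra.adjoin (ZMod p) s) b :=
    isAlgebraic_algebraMap (⟨b, hsub hb⟩ : Algebra.adjoin (ZMod p) s)
  rw [div_eq_mul_inv]
  exact h1.mul h2.inv

theorem exchange {R V : Type*} [Field R] [Field V] [Algebra R V] (x y : V)
    (hy : Transcendental R y) (h : IsAlgebraic (Algebra.adjoin R {x}) y) :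
    IsAlgebraic (Algebra.adjoin R {y}) x := by
  by_cases hxy : x = y
  · subst hxy; exact h
  by_contra hcon
  have h1 : AlgebraicIndepOn R id ({y} : Set V) := by
    apply (algebraicIndependent_singleton_iff (⟨y, rfl⟩ : ({y} : Set V))).2
    exact hy
  have h2 : AlgebraicIndepOn R id (insert x {y} : Set V) := by
    apply h1.insert
    rw [Set.image_id]; exact hcon
  rw [Set.pair_comm] at h2
  have h3 := ((AlgebraicIndepOn.insert_iff (by simpa using fun h => hxy h.symm)).1 h2).2
  rw [Set.image_id] at h3
  exact h3 h

theorem alg_of_pow_mem {F V : Type*} [Field F] [Field V] [Algebra F V] (y : V)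
    (W : Submodule F V) [FiniteDimensional F W] (hW : ∀ n : ℕ, y ^ n ∈ W) : IsAlgebraic F y := by
  have hdep : ¬ LinearIndependent F (fun n : ℕ => (⟨y ^ n, hW n⟩ : W)) := by
    intro h
    have := h.finite
    exact not_finite ℕ
  by_contra htr
  apply hdep
  have h1 : LinearIndependent F (fun n : ℕ => y ^ n) := by
    have h2 := (Polynomial.basisMonomials F).linearIndependent.map'
      (Polynomial.aeval y : Polynomial F →ₐ[F] V).toLinearMap
      (LinearMap.ker_eq_bot.2 (transcendental_iff_injective.1 htr))
    have h3 : (fun n : ℕ => y ^ n) = (Polynomial.aeval y : Polynomial F →ₐ[F] V).toLinearMap ∘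
        (Polynomial.basisMonomials F) := by
      funext n
      simp [Polynomial.aeval_monomial]
    rw [h3]; exact h2
  exact LinearIndependent.of_comp W.subtype h1

variable {V : Type*} [Field V] (p : ℕ) [hp : Fact p.Prime] [CharP V p] [Algebra (ZMod p) V]

theorem alg_FF_of_alg_K (K : Subfield V) (x₀ : V)
    (hfin : Module.rank (Subfield.closure {x₀})
      (Submodule.span (Subfield.closure {x₀}) (K : Set V)) < Cardinal.aleph0)
    (π : V) (hπ : Transcendental (ZMod p) π) (hπK : IsAlgebraic K π) :
    (∀ x : V, IsAlgebraic K x → IsAlgebraic (FF p π) x) ∧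
    (x₀ ∈ K → ∃ E : IntermediateField (FF p π) V, FiniteDimensional (FF p π) E ∧ ∀ x ∈ K, x ∈ E) := by
  have hfd : FiniteDimensional (Subfield.closure {x₀})
      (Submodule.span (Subfield.closure {x₀}) (K : Set V)) := Module.rank_lt_aleph0_iff.1 hfin
  have h1 : ∀ y ∈ K, IsAlgebraic (Subfield.closure {x₀}) y := fun y hy =>
    alg_of_pow_mem y _ fun n => Submodule.subset_span (pow_mem hy n)
  have h2 : ∀ x : V, IsAlgebraic K x → IsAlgebraic (Algebra.adjoin (ZMod p) {x₀}) x := by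
    intro x hx
    have h3 := alg_adjoin_of_subfield p _ (alg_trans p _ K h1 hx)
    exact h3.adjoin_of_forall_isAlgebraic fun y hy => closure_alg_adjoin p _ y hy.1
  have h4 := exchange x₀ π hπ (h2 π hπK)
  have h5 : ∀ x : V, IsAlgebraic K x → IsAlgebraic (FF p π) x := by
    intro x hx
    apply alg_subfield_of_adjoin p (FF p π) {π}
    · simpa using self_mem_FF p π
    · refine (h2 x hx).adjoin_of_forall_isAlgebraic fun y hy => ?_
      have : y = x₀ := by simpa using hy.1
      rw [this]; exact h4
  refine ⟨h5, fun hx₀ => ?_⟩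
  have hfg : (Submodule.span (Subfield.closure {x₀}) (K : Set V)).FG :=
    Module.Finite.iff_fg.1 hfd
  obtain ⟨w, hw, hw2⟩ := Submodule.fg_span_iff_fg_span_finset_subset _ |>.1 hfg
  let S : Set V := insert x₀ (w : Set V)
  have hS : S ⊆ K := Set.insert_subset hx₀ hw
  have hSf : S.Finite := w.finite_toSet.insert _
  have : Finite S := hSf
  refine ⟨IntermediateField.adjoin (FF p π) S, ?_, ?_⟩
  · apply IntermediateField.finiteDimensional_adjoin
    intro x hx
    exact (h5 x (isAlgebraic_algebraMap (⟨x, hS hx⟩ : K))).isIntegral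
  · intro x hx
    have hx' : x ∈ Submodule.span (Subfield.closure {x₀}) (w : Set V) := by
      rw [← hw2]; exact Submodule.subset_span hx
    have hle : Subfield.closure {x₀} ≤ (IntermediateField.adjoin (FF p π) S).toSubfield := by
      rw [Subfield.closure_le, Set.singleton_subset_iff]
      exact IntermediateField.subset_adjoin _ _ (Set.mem_insert _ _)
    clear hx
    induction hx' using Submodule.span_induction with
    | mem x hx => exact IntermediateField.subset_adjoin _ _ (Set.mem_insert_of_mem _ hx)
    | zero => exact zero_mem _
    | add x y _ _ h1 h2 => exact add_mem h1 h2
    | smul a x _ h => exact mul_mem (hle a.2) h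

theorem FF_frob (π : V) (m : ℕ) (h : FF p π) : ∃ c : Fin (p ^ m) → FF p π,
    h = ∑ j : Fin (p ^ m), (⟨π, self_mem_FF p π⟩ : FF p π) ^ (j : ℕ) * c j ^ p ^ m := by
  have hq : 0 < p ^ m := pow_pos hp.out.pos m
  have hpoly : ∀ f : Polynomial (ZMod p), ∃ c : Fin (p ^ m) → FF p π,
      Polynomial.aeval π f = ∑ j : Fin (p ^ m), π ^ (j : ℕ) * (c j : V) ^ p ^ m := by
    intro f
    induction f using Polynomial.induction_on' with
    | add f g hf hg =>
      obtain ⟨c, hc⟩ := hf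
      obtain ⟨d, hd⟩ := hg
      refine ⟨fun j => c j + d j, ?_⟩
      rw [map_add, hc, hd, ← Finset.sum_add_distrib]
      refine Finset.sum_congr rfl fun j _ => ?_
      push_cast
      rw [add_pow_char_pow]; ring
    | monomial n a =>
      refine ⟨fun j => if (j : ℕ) = n % p ^ m then
        ⟨Polynomial.aeval π (Polynomial.monomial (n / p ^ m) a), aeval_mem_FF p π _⟩ else 0, ?_⟩
      rw [Finset.sum_eq_single ⟨n % p ^ m, Nat.mod_lt _ hq⟩]
      · simp only [if_true]
        rw [Polynomial.aeval_monomial, Polynomial.aeval_monomial, mul_pow, ← map_pow,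
          ZMod.pow_card_pow, ← pow_mul]
        calc _ = algebraMap (ZMod p) V a * π ^ (n % p ^ m + n / p ^ m * p ^ m) := by
              rw [Nat.mod_add_div']
          _ = _ := by rw [pow_add]; ring
      · intro j _ hj
        dsimp only
        rw [if_neg, ZeroMemClass.coe_zero, zero_pow hq.ne', mul_zero]
        intro h; apply hj; ext; exact h
      · simp
  obtain ⟨f, g, hg, hfg⟩ := mem_frac' _ _ h.2
  obtain ⟨c, hc⟩ := hpoly (f * g ^ (p ^ m - 1))
  have hg' : Polynomial.aeval π g ≠ 0 := hg
  have hfg' : Polynomial.aeval π g * (h : V) = Polynomial.aeval π f := hfg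
  refine ⟨fun j => c j / ⟨Polynomial.aeval π g, aeval_mem_FF p π g⟩, ?_⟩
  apply Subtype.ext
  push_cast
  have h6 : (h : V) = Polynomial.aeval π (f * g ^ (p ^ m - 1)) / (Polynomial.aeval π g) ^ p ^ m := by
    rw [eq_div_iff (pow_ne_zero _ hg'), map_mul, map_pow, ← hfg']
    conv_lhs => rw [← Nat.sub_add_cancel hq, pow_succ]
    ring
  rw [h6, hc, Finset.sum_div]
  refine Finset.sum_congr rfl fun j _ => ?_
  rw [div_pow]; ring

end AlgRed

section AutoAlg

set_option linter.unusedSectionVars false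

variable {V : Type*} [Field V] [Valued V ZM0] [CompleteSpace V] (p : ℕ) [hp : Fact p.Prime]
  [CharP V p]

theorem EE_frob {π : V} (hπ : Valued.v π < 1) (χ : ℕ → V) (hχ : ∀ n, χ n ^ p = χ n)
    (hb : ∀ n, Valued.v (χ n) ≤ 1) :
    EE π χ = ∑ j : ZMod p, π ^ j.val * EE π (fun n => χ (n * p + j.val)) ^ p := by
  unfold EE
  rw [Nat.sumByResidueClasses (summable_bounded hπ χ hb) p]
  refine Finset.sum_congr rfl fun j _ => ?_
  have h1 := (summable_bounded hπ (fun n => χ (n * p + j.val)) fun n => hb _).hasSum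
  have h2 : HasSum (fun n => (χ (n * p + j.val) * π ^ n) ^ p)
      ((∑' n, χ (n * p + j.val) * π ^ n) ^ p) := h1.map (frobenius V p) (continuous_pow p)
  rw [← h2.tsum_eq, ← tsum_mul_left]
  refine tsum_congr fun n => ?_
  rw [mul_pow, hχ, add_comm j.val, mul_comm p n, pow_add, pow_mul]
  ring

theorem auto_range_finite {α : Type*} (b : ℕ → α) (hb : IsKAutomatic p b) :
    (Set.range b).Finite := by
  refine (hb.image (fun c => c 0)).subset ?_
  rintro _ ⟨n, rfl⟩
  refine ⟨fun m => b (m * p ^ n + n), ⟨n, n, Nat.lt_pow_self hp.out.one_lt, rfl⟩, ?_⟩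
  simp

theorem alg_of_auto {π : V} (hπ : Valued.v π < 1) (L : Subfield V) (hπL : π ∈ L) (b : ℕ → V)
    (hb : ∀ n, Valued.v (b n) ≤ 1) (hbL : ∀ n, b n ∈ L) (ha : IsKAutomatic p b) :
    IsAlgebraic L (EE π b) := by
  classical
  have hR := auto_range_finite p b ha
  let 𝒦 : Set (ℕ → V) := {c | ∃ i j : ℕ, j < p ^ i ∧ c = fun n => b (n * p ^ i + j)}
  have h𝒦 : 𝒦.Finite := ha
  have : Fintype 𝒦 := h𝒦.fintype
  have : Fintype (Set.range b) := hR.fintype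
  let χ : (ℕ → V) → V → ℕ → V := fun c γ n => if c n = γ then 1 else 0
  have hχ : ∀ c γ n, Valued.v (χ c γ n) ≤ 1 := by
    intro c γ n
    simp only [χ]
    split_ifs <;> simp
  have hχp : ∀ c γ n, χ c γ n ^ p = χ c γ n := by
    intro c γ n
    simp only [χ]
    split_ifs
    · simp
    · simp [hp.out.ne_zero]
  have hker : ∀ c ∈ 𝒦, ∀ j < p, (fun n => c (n * p + j)) ∈ 𝒦 := by
    rintro _ ⟨i, k, hk, rfl⟩ j hj
    refine ⟨i + 1, j * p ^ i + k, ?_, ?_⟩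
    · calc j * p ^ i + k < j * p ^ i + p ^ i := by omega
        _ = (j + 1) * p ^ i := by ring
        _ ≤ p * p ^ i := Nat.mul_le_mul_right _ hj
        _ = p ^ (i + 1) := by ring
    · funext n
      have : (n * p + j) * p ^ i + k = n * p ^ (i + 1) + (j * p ^ i + k) := by ring
      simp only [this]
  let g : 𝒦 × Set.range b → V := fun i => EE π (χ i.1 i.2)
  have hg : ∀ i, ∃ c : 𝒦 × Set.range b → L, g i = ∑ j, algebraMap L V (c j) * g j ^ p := by
    intro i
    have hmem : g i ∈ Submodule.span L (Set.range fun j => g j ^ p) := by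
      have h1 : g i = _ := EE_frob p hπ (χ i.1 i.2) (hχp _ _) (hχ _ _)
      rw [h1]
      apply Submodule.sum_mem
      intro j _
      have : π ^ j.val * EE π (fun n => χ i.1 i.2 (n * p + j.val)) ^ p =
          (⟨π, hπL⟩ ^ j.val : L) •
            (fun j => g j ^ p) (⟨_, hker i.1 i.1.2 j.val (ZMod.val_lt j)⟩, i.2) := by
        rw [Algebra.smul_def]
        rfl
      rw [this]
      exact Submodule.smul_mem _ _ (Submodule.subset_span ⟨_, rfl⟩)
    obtain ⟨c, hc⟩ := (Submodule.mem_span_range_iff_exists_fun L).1 hmem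
    refine ⟨c, ?_⟩
    rw [← hc]
    exact Finset.sum_congr rfl fun j _ => by rw [Algebra.smul_def]
  have halg := algebraic_of_frob_span (F := L) p g hg
  have hb𝒦 : b ∈ 𝒦 := ⟨0, 0, by simp, by simp⟩
  have hsum : EE π b = ∑ γ : Set.range b, (γ : V) * g (⟨b, hb𝒦⟩, γ) := by
    have h1 : b = fun n => ∑ γ : Set.range b, (γ : V) * χ b γ n := by
      funext n
      rw [Finset.sum_eq_single ⟨b n, n, rfl⟩]
      · simp [χ]
      · intro γ _ hγ
        simp only [χ]
        rw [if_neg, mul_zero]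
        intro h; apply hγ; ext; exact h.symm
      · simp
    conv_lhs => rw [h1]
    rw [EE_sum hπ]
    · exact Finset.sum_congr rfl fun γ _ => EE_smul _ _
    · rintro ⟨_, m, rfl⟩ _ n
      rw [map_mul]
      exact mul_le_one' (hb m) (hχ _ _ _)
  rw [hsum]
  refine Finset.sum_induction _ (fun y => IsAlgebraic L y) (fun a b => IsAlgebraic.add)
    isAlgebraic_zero ?_
  rintro ⟨_, m, rfl⟩ _
  exact (isAlgebraic_algebraMap (⟨b m, hbL m⟩ : L)).mul (halg _)

end AutoAlg

section AlgAuto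

set_option linter.unusedSectionVars false

theorem auto_of_coords {α β ι : Type*} [Finite ι] (k : ℕ) (c : ι → ℕ → α) (Φ : (ι → α) → β)
    (h : ∀ i, IsKAutomatic k (c i)) : IsKAutomatic k (fun n => Φ fun i => c i n) := by
  refine ((Set.Finite.pi' h).image (fun d n => Φ fun i => d i n)).subset ?_
  rintro _ ⟨i, j, hj, rfl⟩
  exact ⟨fun l n => c l (n * k ^ i + j), fun l => ⟨i, j, hj, rfl⟩, rfl⟩

variable {V : Type*} [Field V] [Valued V ZM0] [CompleteSpace V] (p : ℕ) [hp : Fact p.Prime]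
  [CharP V p] [Algebra (ZMod p) V]

theorem auto_of_alg_phi {π : V} (hπ0 : π ≠ 0) (hπ : Valued.v π < 1) (f : PowerSeries (ZMod p))
    (h : IsAlgebraic (FF p π) (phi p π hπ f)) :
    IsKAutomatic p (fun n => PowerSeries.coeff n f) := by
  set y := phi p π hπ f with hy
  let E := IntermediateField.adjoin (FF p π) {y}
  have hfd : FiniteDimensional (FF p π) E := IntermediateField.adjoin.finiteDimensional h.isIntegral
  let W : Submodule (FF p π) V := Subalgebra.toSubmodule E.toSubalgebra
  have hfdW : FiniteDimensional (FF p π) W := hfd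
  obtain ⟨c, ⟨k, hk, hck⟩, hc⟩ := ore_rel p y W (Module.finrank (FF p π) W) le_rfl
    (fun k _ => pow_mem (IntermediateField.mem_adjoin_simple_self (FF p π) y) _)
  set n := Module.finrank (FF p π) W
  obtain ⟨d, g, hd, hg⟩ := common_denom
    ((Polynomial.aeval π : Polynomial (ZMod p) →ₐ[ZMod p] V) : Polynomial (ZMod p) →+* V)
    (fun k : Fin (n + 1) => (c k : V)) (fun k => (c k).2)
  simp only [RingHom.coe_coe] at hd hg
  let g' : ℕ → Polynomial (ZMod p) := fun k => if h : k < n + 1 then g ⟨k, h⟩ else 0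
  have hg' : ∀ k < n + 1, Polynomial.aeval π d * (c k : V) = Polynomial.aeval π (g' k) := by
    intro k hk
    simp only [g']
    rw [dif_pos hk, ← hg ⟨k, hk⟩]
  apply christol_forward p f n g'
  · refine ⟨k, hk, fun h0 => ?_⟩
    have h1 := hg' k (by omega)
    rw [h0, map_zero] at h1
    rcases mul_eq_zero.1 h1 with h2 | h2
    · exact hd h2
    · exact hck (by exact_mod_cast h2)
  · apply phi_injective p π hπ0 hπ
    rw [map_zero, map_sum]
    calc ∑ k ∈ Finset.range (n + 1), phi p π hπ (g' k * f ^ p ^ k)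
        = ∑ k ∈ Finset.range (n + 1), Polynomial.aeval π d * ((c k : V) * y ^ p ^ k) := by
          refine Finset.sum_congr rfl fun k hk => ?_
          rw [map_mul, map_pow, phi_coe, ← hg' k (Finset.mem_range.1 hk), ← hy, mul_assoc]
      _ = 0 := by
          rw [← Finset.mul_sum]
          have : ∑ k ∈ Finset.range (n + 1), (c k : V) * y ^ p ^ k = 0 := hc
          rw [this, mul_zero]

theorem pi_transcendental {π : V} (hπ0 : π ≠ 0) (hπ : Valued.v π < 1) :
    Transcendental (ZMod p) π := by
  rw [transcendental_iff_injective, injective_iff_map_eq_zero]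
  intro f hf
  have := phi_injective p π hπ0 hπ (a₁ := f) (a₂ := 0) (by rw [phi_coe, hf, map_zero])
  exact_mod_cast this

/-- The field of Laurent series in `π`. -/
noncomputable def MM (p : ℕ) [Fact p.Prime] [Algebra (ZMod p) V] (π : V) (hπ : Valued.v π < 1) :
    Subfield V := Subfield.closure ((phi p π hπ).range : Set V)

theorem phi_mem_MM {π : V} (hπ : Valued.v π < 1) (f : PowerSeries (ZMod p)) :
    phi p π hπ f ∈ MM p π hπ := Subfield.subset_closure ⟨f, rfl⟩

theorem FF_le_MM {π : V} (hπ : Valued.v π < 1) : FF p π ≤ MM p π hπ := by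
  apply Subfield.closure_le.2
  rintro _ ⟨f, rfl⟩
  have h := phi_mem_MM p hπ (f : PowerSeries (ZMod p))
  rw [phi_coe] at h
  exact h

theorem MM_indep {π : V} (hπ0 : π ≠ 0) (hπ : Valued.v π < 1) (G : Submodule (ZMod p) V)
    (hG : IsCompleteSetOfReps π (G : Set V))
    {ι : Type*} [Fintype ι] (γ u : ι → V) (hγ : ∀ i, γ i ∈ G)
    (hli : LinearIndependent (ZMod p) γ) (hu : ∀ i, Valued.v (u i - γ i) ≤ Valued.v π)
    (c : ι → V) (hc : ∀ i, c i ∈ MM p π hπ) (h : ∑ i, c i * u i = 0) (i : ι) : c i = 0 := by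
  obtain ⟨d, f, hd, hf⟩ := common_denom (phi p π hπ) c hc
  have h1 : ∑ i, phi p π hπ (f i) * u i = 0 := by
    rw [← mul_zero (phi p π hπ d), ← h, Finset.mul_sum]
    exact Finset.sum_congr rfl fun i _ => by rw [← hf i]; ring
  have h2 := G_indep p hπ0 hπ G hG γ u hγ hli hu f h1 i
  have h3 := hf i
  rw [h2, map_zero] at h3
  exact (mul_eq_zero.1 h3).resolve_left hd

theorem EE_coords {π : V} (hπ : Valued.v π < 1) (G : Submodule (ZMod p) V)
    (hG : IsCompleteSetOfReps π (G : Set V)) {ι : Type*} [Fintype ι]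
    (e : Module.Basis ι (ZMod p) G) (b : ℕ → G) :
    EE π (fun n => (b n : V)) =
      ∑ i, phi p π hπ (PowerSeries.mk fun n => e.repr (b n) i) * (e i : V) := by
  have h1 : (fun n => (b n : V)) =
      fun n => ∑ i, (e i : V) * algebraMap (ZMod p) V (e.repr (b n) i) := by
    funext n
    have h2 := congrArg G.subtype (e.sum_repr (b n))
    rw [map_sum] at h2
    change G.subtype (b n) = _
    rw [← h2]
    refine Finset.sum_congr rfl fun i _ => ?_
    rw [map_smul, Algebra.smul_def, mul_comm]
    rfl
  rw [h1, EE_sum hπ]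
  · refine Finset.sum_congr rfl fun i _ => ?_
    rw [EE_smul, mul_comm, phi_apply]
    simp
  · intro i _ n
    rw [map_mul]
    exact mul_le_one' (hG.1 _ (e i).2) (v_zmod_le p _)

theorem MM_span {π : V} (hπ0 : π ≠ 0) (hπ : Valued.v π < 1) (G : Submodule (ZMod p) V)
    (hG : IsCompleteSetOfReps π (G : Set V)) {ι : Type*} [Fintype ι]
    (e : Module.Basis ι (ZMod p) G) :
    ⊤ ≤ Submodule.span (MM p π hπ) (Set.range fun i => (e i : V)) := by
  intro x _
  obtain ⟨k, hk⟩ : ∃ k : ℕ, Valued.v (π ^ k * x) ≤ 1 := by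
    by_cases hx : x = 0
    · exact ⟨0, by simp [hx]⟩
    have hx' : Valued.v x⁻¹ ≠ 0 := (Valuation.ne_zero_iff _).2 (inv_ne_zero hx)
    obtain ⟨n, hn⟩ := exists_pow_lt₀ hπ (Units.mk0 _ hx')
    refine ⟨n, ?_⟩
    rw [Units.val_mk0] at hn
    have h1 : Valued.v (π ^ n * x) ≤ Valued.v x⁻¹ * Valued.v x := by
      rw [map_mul, map_pow]
      exact mul_le_mul_left hn.le _
    rwa [← map_mul, inv_mul_cancel₀ hx, map_one] at h1
  obtain ⟨a, ha, hxa⟩ := exists_digits p hπ0 hπ G hG _ hk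
  have h2 := EE_coords p hπ G hG e (fun n => ⟨a n, ha n⟩)
  have h3 : π ^ k * x ∈ Submodule.span (MM p π hπ) (Set.range fun i => (e i : V)) := by
    rw [hxa]
    change EE π (fun n => ((⟨a n, ha n⟩ : G) : V)) ∈ _
    rw [h2]
    apply Submodule.sum_mem
    intro i _
    exact Submodule.smul_mem _ (⟨_, phi_mem_MM p hπ _⟩ : MM p π hπ) (Submodule.subset_span ⟨i, rfl⟩)
  have h4 := Submodule.smul_mem _ ((⟨π, FF_le_MM p hπ (self_mem_FF p π)⟩ : MM p π hπ) ^ k)⁻¹ h3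
  rw [Algebra.smul_def] at h4
  have h5 : algebraMap (MM p π hπ) V ((⟨π, FF_le_MM p hπ (self_mem_FF p π)⟩ : MM p π hπ) ^ k)⁻¹ =
    (π ^ k)⁻¹ := rfl
  rwa [h5, inv_mul_cancel_left₀ (pow_ne_zero _ hπ0)] at h4

end AlgAuto

section Descent

variable {V : Type*} [Field V] [Valued V ZM0] [CompleteSpace V] (p : ℕ) [hp : Fact p.Prime]
  [CharP V p] [Algebra (ZMod p) V]

set_option maxHeartbeats 1000000 in
theorem descent {π : V} (hπ0 : π ≠ 0) (hπ : Valued.v π < 1) (G : Submodule (ZMod p) V)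
    (hG : IsCompleteSetOfReps π (G : Set V)) {ι : Type*} [Fintype ι]
    (e : Module.Basis ι (ZMod p) G) (L : Subfield V)
    (hLF : ∀ x ∈ L, IsAlgebraic (FF p π) x) (hLcl : ∀ x : V, IsAlgebraic L x → x ∈ L)
    (hGL : ∀ γ ∈ G, γ ∈ L) (hπL : π ∈ L) (x : V) (hx : x ∈ L) :
    ∃ y : ι → V, (∀ i, y i ∈ MM p π hπ ∧ y i ∈ L) ∧ x = ∑ i, y i * (e i : V) := by
  have hFL : FF p π ≤ L := by
    apply Subfield.closure_le.2
    rintro _ ⟨f, rfl⟩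
    apply adjoin_le_subfield p L {π} (by simpa using hπL)
    rw [Algebra.adjoin_singleton_eq_range_aeval]
    exact ⟨f, rfl⟩
  have hli : LinearIndependent (ZMod p) (fun i => (e i : V)) :=
    e.linearIndependent.map' G.subtype (Submodule.ker_subtype G)
  have hind : ∀ c : ι → V, (∀ i, c i ∈ MM p π hπ) → ∑ i, c i * (e i : V) = 0 → ∀ i, c i = 0 :=
    fun c hc h => MM_indep p hπ0 hπ G hG (fun i => (e i : V)) (fun i => (e i : V))
      (fun i => (e i).2) hli (fun i => by simp) c hc h
  have hMli : LinearIndependent (MM p π hπ) (fun i => (e i : V)) := by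
    rw [Fintype.linearIndependent_iff]
    intro g hg i
    have := hind (fun i => (g i : V)) (fun i => (g i).2) hg i
    exact_mod_cast this
  let B := Module.Basis.mk hMli (MM_span p hπ0 hπ G hG e)
  have hfin : FiniteDimensional (MM p π hπ) V := Module.Basis.finiteDimensional_of_finite B
  have hfr : Module.finrank (MM p π hπ) V = Fintype.card ι := Module.finrank_eq_card_basis B
  let M := MM p π hπ
  let M0 : Subfield V := M ⊓ L
  let _ : Algebra M0 M := (Subfield.inclusion (inf_le_left : M0 ≤ M)).toAlgebra
  let _ : Algebra M0 L := (Subfield.inclusion (inf_le_right : M0 ≤ L)).toAlgebra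
  let _ : Algebra (FF p π) L := (Subfield.inclusion hFL).toAlgebra
  have : IsScalarTower M0 M V := .of_algebraMap_eq fun _ => rfl
  have : IsScalarTower M0 L V := .of_algebraMap_eq fun _ => rfl
  have : IsScalarTower (FF p π) L V := .of_algebraMap_eq fun _ => rfl
  have : CharP M p := (algebraMap M V).charP (algebraMap M V).injective p
  have : CharP (FF p π) p := (algebraMap (FF p π) V).charP (algebraMap (FF p π) V).injective p
  have hFM0 : FF p π ≤ M0 := le_inf (FF_le_MM p hπ) hFL
  have : Algebra.IsAlgebraic (FF p π) L := ⟨fun y =>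
    (isAlgebraic_algebraMap_iff (algebraMap L V).injective).1 (hLF y y.2)⟩
  have : Algebra.IsAlgebraic M0 L := ⟨fun y =>
    (isAlgebraic_algebraMap_iff (algebraMap L V).injective).1
      (isAlg_mono (R₁ := FF p π) Subtype.val_injective
        (fun r => ⟨⟨r.1, hFM0 r.2⟩, rfl⟩) (hLF y y.2))⟩
  have hrank : Module.rank M0 L ≤ (Module.finrank M V : ℕ) := by
    apply rank_bound p
    · intro m hm
      have h1 : IsAlgebraic M0 (algebraMap M V m) :=
        (isAlgebraic_algebraMap_iff (algebraMap M V).injective).2 hm.isAlgebraic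
      have h2 : IsAlgebraic L (algebraMap M V m) :=
        isAlg_mono (R₁ := M0) Subtype.val_injective
          (fun r => ⟨⟨r.1, r.2.2⟩, rfl⟩) h1
      exact ⟨⟨m.1, m.2, hLcl _ h2⟩, rfl⟩
    · exact frob_rel (F := FF p π) p ⟨π, self_mem_FF p π⟩ (FF_frob p π)
  let γL : ι → L := fun i => ⟨e i, hGL _ (e i).2⟩
  have hγL : LinearIndependent M0 γL := by
    rw [Fintype.linearIndependent_iff]
    intro g hg i
    have h1 := congrArg (algebraMap L V) hg
    rw [map_sum, map_zero] at h1
    have := hind (fun i => (g i : V)) (fun i => (g i).2.1) h1 i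
    exact_mod_cast this
  have hM0fin : Module.Finite M0 L :=
    Module.rank_lt_aleph0_iff.1 (hrank.trans_lt Cardinal.natCast_lt_aleph0)
  have hcard : Fintype.card ι = Module.finrank M0 L := by
    apply le_antisymm hγL.fintype_card_le_finrank
    rw [← hfr]
    have := hrank
    rw [← Module.finrank_eq_rank] at this
    exact_mod_cast this
  have hspan := hγL.span_eq_top_of_card_eq_finrank' hcard
  have hxs : (⟨x, hx⟩ : L) ∈ Submodule.span M0 (Set.range γL) := by rw [hspan]; trivial
  obtain ⟨c, hc⟩ := (Submodule.mem_span_range_iff_exists_fun M0).1 hxs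
  refine ⟨fun i => (c i : V), fun i => (c i).2, ?_⟩
  have h1 := congrArg (algebraMap L V) hc
  rw [map_sum] at h1
  exact h1.symm

theorem auto_of_alg {π : V} (hπ0 : π ≠ 0) (hπ : Valued.v π < 1) (G : Submodule (ZMod p) V)
    (hG : IsCompleteSetOfReps π (G : Set V)) {ι : Type*} [Fintype ι]
    (e : Module.Basis ι (ZMod p) G) (L : Subfield V)
    (hLF : ∀ x ∈ L, IsAlgebraic (FF p π) x) (hLcl : ∀ x : V, IsAlgebraic L x → x ∈ L)
    (hGL : ∀ γ ∈ G, γ ∈ L) (hπL : π ∈ L) (b : ℕ → G) (hx : EE π (fun n => (b n : V)) ∈ L) :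
    IsKAutomatic p (fun n => (b n : V)) := by
  obtain ⟨y, hy, hxy⟩ := descent p hπ0 hπ G hG e L hLF hLcl hGL hπL _ hx
  have hli : LinearIndependent (ZMod p) (fun i => (e i : V)) :=
    e.linearIndependent.map' G.subtype (Submodule.ker_subtype G)
  rw [EE_coords p hπ G hG e b] at hxy
  have heq : ∀ i, phi p π hπ (PowerSeries.mk fun n => e.repr (b n) i) - y i = 0 := by
    apply MM_indep p hπ0 hπ G hG (fun i => (e i : V)) (fun i => (e i : V))
      (fun i => (e i).2) hli (fun i => by simp)
    · intro i
      exact sub_mem (phi_mem_MM p hπ _) (hy i).1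
    · simp only [sub_mul, Finset.sum_sub_distrib]
      rw [hxy, sub_self]
  have hauto : ∀ i, IsKAutomatic p (fun n => e.repr (b n) i) := by
    intro i
    have h1 : phi p π hπ (PowerSeries.mk fun n => e.repr (b n) i) ∈ L := by
      rw [sub_eq_zero.1 (heq i)]; exact (hy i).2
    have h2 := auto_of_alg_phi p hπ0 hπ _ (hLF _ h1)
    simpa using h2
  have h3 := auto_of_coords p (fun i n => e.repr (b n) i)
    (fun d => ((∑ i, d i • e i : G) : V)) hauto
  simp only [e.sum_repr] at h3
  exact h3

theorem G_finite {π : V} (hπ0 : π ≠ 0) (hπ : Valued.v π < 1) (G : Submodule (ZMod p) V)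
    (hG : IsCompleteSetOfReps π (G : Set V)) (K : Subfield V) (hK : Dense (K : Set V))
    (E : IntermediateField (FF p π) V) (hE : FiniteDimensional (FF p π) E)
    (hKE : ∀ x ∈ K, x ∈ E) : Module.Finite (ZMod p) G := by
  have happ : ∀ γ : V, ∃ u ∈ K, Valued.v (u - γ) ≤ Valued.v π := by
    intro γ
    obtain ⟨u, huK, hu⟩ := hK.inter_nhds_nonempty (ball_mem_nhds γ π hπ0)
    exact ⟨u, huK, hu⟩
  choose u huK hu using happ
  apply Module.rank_lt_aleph0_iff.1
  refine lt_of_le_of_lt (b := ((Module.finrank (FF p π) E : ℕ) : Cardinal)) ?_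
    Cardinal.natCast_lt_aleph0
  apply rank_le
  intro s hs
  let w : s → E := fun i => ⟨u (i : G), hKE _ (huK _)⟩
  have hw : LinearIndependent (FF p π) w := by
    rw [Fintype.linearIndependent_iff]
    intro g hg i
    have h1 := congrArg (algebraMap E V) hg
    rw [map_sum, map_zero] at h1
    have hli : LinearIndependent (ZMod p) (fun i : s => ((i : G) : V)) :=
      LinearIndependent.map' (v := fun i : s => (i : G)) hs G.subtype (Submodule.ker_subtype G)
    have := MM_indep p hπ0 hπ G hG (fun i : s => ((i : G) : V)) (fun i : s => u (i : G))
      (fun i => (i : G).2) hli (fun i => hu _) (fun i => (g i : V))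
      (fun i => FF_le_MM p hπ (g i).2) h1 i
    exact_mod_cast this
  simpa using hw.fintype_card_le_finrank

end Descent

section Final

theorem expansion_eq {V : Type*} [Field V] [Valued V ZM0] {π : V} (hπ0 : π ≠ 0) {Γ : Set V}
    {m : ℤ} {a : ℤ → V} {x : V} (h : IsExpansion π Γ m a x) :
    x = π ^ m * EE π (fun n : ℕ => a (m + n)) := by
  rw [← h.2.tsum_eq]
  unfold EE
  rw [← tsum_mul_left]
  refine tsum_congr fun n => ?_
  rw [zpow_add₀ hπ0, zpow_natCast]
  ring

theorem single_auto {α : Type*} [Zero α] (p : ℕ) (hp : p ≠ 0) (γ : α) :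
    IsKAutomatic p (fun n : ℕ => if n = 0 then γ else 0) := by
  refine (Set.toFinite {(fun n : ℕ => if n = 0 then γ else 0), fun _ => 0}).subset ?_
  rintro _ ⟨i, j, -, rfl⟩
  by_cases hj : j = 0
  · left
    funext n
    simp [hj, hp]
  · right
    simp [hj]

theorem alg_of_propB {V : Type*} [Field V] [Valued V ZM0] (p : ℕ) [hp : Fact p.Prime]
    (K : Subfield V) (π : V) (Γ : Set V) (h0 : (0 : V) ∈ Γ)
    (hB : HasPropertyB p K π Γ) (γ : V) (hγ : γ ∈ Γ) (m : ℤ) : IsAlgebraic K (γ * π ^ m) := by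
  refine (hB (γ * π ^ m) m (fun n => if n = m then γ else 0) ⟨?_, ?_⟩).2 ?_
  · intro n _
    dsimp only
    split_ifs
    · exact hγ
    · exact h0
  · convert hasSum_single (f := fun n : ℕ => (if m + (n : ℤ) = m then γ else 0) *
      π ^ (m + (n : ℤ))) 0 ?_ using 1
    · simp
    · intro n hn
      simp [hn]
  · have := single_auto p hp.out.ne_zero γ
    convert this using 3
    simp

end Final

/-- **Theorem 3.5.** Suppose `Γ` is additively closed.  Then `(Γ, π)` has
property B if and only if `π` and all elements of `Γ` are algebraic over `K`. -/
theorem propertyB_iff_algebraic_of_addClosed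
    {Kv : Type*} [Field Kv] [Valued Kv ZM0]
    (p : ℕ) [Fact p.Prime] (K : Subfield Kv)
    (hK : IsGlobalFunctionFieldCompletion p K)
    (π : Kv) (hπ0 : π ≠ 0) (hπ : Valued.v π < 1)
    (Γ : Set Kv) (hΓ : IsCompleteSetOfReps π Γ)
    (hadd : ∀ μ ∈ Γ, ∀ ν ∈ Γ, μ + ν ∈ Γ) :
    HasPropertyB p K π Γ ↔ (IsAlgebraic ↥K π ∧ ∀ γ ∈ Γ, IsAlgebraic ↥K γ) := by
  classical
  have hchar := hK.charP
  have hcomp := hK.complete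
  let _ : Algebra (ZMod p) Kv := ZMod.algebra Kv p
  obtain ⟨G, hGΓ⟩ := gamma_submodule p π Γ hΓ hadd
  subst hGΓ
  constructor
  · intro hB
    have h1 := alg_of_propB p K π G G.zero_mem hB
    have h2 : ∀ γ ∈ (G : Set Kv), IsAlgebraic K γ := by
      intro γ hγ
      simpa using h1 γ hγ 0
    refine ⟨?_, h2⟩
    obtain ⟨γ, ⟨hγ, hγ1⟩, -⟩ := hΓ.2 1 (by simp)
    have hγ0 : γ ≠ 0 := by
      rintro rfl
      rw [sub_zero, map_one] at hγ1
      exact absurd hπ (not_lt.2 hγ1)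
    have h3 := (h1 γ hγ 1).mul (h2 γ hγ).inv
    have h4 : γ * π ^ (1 : ℤ) * γ⁻¹ = π := by
      rw [zpow_one]; field_simp
    rwa [h4] at h3
  · rintro ⟨hπK, hΓK⟩
    obtain ⟨x₀, hx₀K, -, hdeg⟩ := hK.globalFunctionField
    obtain ⟨hKF, hE⟩ := alg_FF_of_alg_K p K x₀ hdeg π (pi_transcendental p hπ0 hπ) hπK
    obtain ⟨E, hEf, hKE⟩ := hE hx₀K
    have hGfin := G_finite p hπ0 hπ G hΓ K hK.dense E hEf hKE
    let e := Module.finBasis (ZMod p) G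
    let L : Subfield Kv := (algebraicClosure K Kv).toSubfield
    have hL : ∀ x : Kv, x ∈ L ↔ IsAlgebraic K x := fun x => mem_algebraicClosure_iff
    have hLcl : ∀ x : Kv, IsAlgebraic L x → x ∈ L := fun x hx =>
      (hL x).2 (alg_trans p K L (fun b hb => (hL b).1 hb) hx)
    have hπL : π ∈ L := (hL π).2 hπK
    have hGL : ∀ γ ∈ G, γ ∈ L := fun γ hγ => (hL γ).2 (hΓK γ hγ)
    intro x m a hexp
    have hx := expansion_eq hπ0 hexp
    have hmem : ∀ n : ℕ, a (m + n) ∈ G := fun n => hexp.1 _ (by omega)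
    have hxE : x ∈ L ↔ EE π (fun n : ℕ => a (m + n)) ∈ L := by
      constructor
      · intro h
        have h5 : EE π (fun n : ℕ => a (m + n)) = (π ^ m)⁻¹ * x := by
          rw [hx, inv_mul_cancel_left₀ (zpow_ne_zero _ hπ0)]
        rw [h5]
        exact mul_mem (inv_mem (zpow_mem hπL m)) h
      · intro h
        rw [hx]
        exact mul_mem (zpow_mem hπL m) h
    rw [← hL, hxE]
    constructor
    · intro h
      exact auto_of_alg p hπ0 hπ G hΓ e L (fun y hy => hKF y ((hL y).1 hy)) hLcl hGL hπL
        (fun n => ⟨a (m + n), hmem n⟩) h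
    · intro h
      exact hLcl _ (alg_of_auto p hπ L hπL _ (fun n => hΓ.1 _ (hmem n))
        (fun n => hGL _ (hmem n)) h)
end
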